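/- arXiv:2006.05511 — 2 statements merged into one kernel-verified Lean document; each statement's English description precedes it below -/
import Mathlib

section
/- If G is a connected unicyclic graph of order n ≥ 3, then ξ(C_n) ≤ ξ(G) ≤ ξ(U_n). -/
/-!
All polynomials are evaluated at `x = -y`, on all induced subgraphs at once (`indepSum`). By the
deletion recurrence `I(S) = I(S - v) - y I(S - N[v])`, values on induced subgraphs decrease in `S`
as long as they are nonnegative. Hence `-ξ(G)` is both the first `y > 0` with `I(G, -y) = 0` and
the first one at which some induced subgraph has a nonpositive value (`exists_xi`).

*Upper bound.* At `y = -ξ(G)` all values are nonnegative. Deleting leaves one at a time shows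
`I(F, -y) ≥ (1 - y)^(k-1) - y` for forests `F` on `k` vertices (`forest_bound`), and from this
`I(G, -y) ≥ (1 - y)^(n-3) (1 - 2y) - y` for unicyclic `G` (`unicyclic_bound`). The right side is
`I(U_n, -y)` (`indepSum_Ugraph`), so `I(U_n, -y) ≤ 0` and `U_n` has a root in `[-y, 0)`.

*Lower bound.* Let `y = -ξ(C_n)` and `a_k = I(P_k, -y) / I(P_{k-1}, -y)` for `k ≤ n - 1`, with
`a_0 = 1`. Then `a_{k+1} = 1 - y / a_k`, and `I(C_n, -y) = 0` means `a_{n-1} = 1/2`. This sequence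
is decreasing, supermultiplicative and convex (`CycleRatio`). If `ξ(G) < ξ(C_n)`, then every
induced subgraph of `G` is positive at `-y`, and by induction
`I(S, -y) ≤ a_{|S|} I(S - A, -y)` whenever `A` meets every component of `S` and `|S| < n`
(`ratio_bound`). Choose an edge `uv` of the cycle of `G`. The components of `G - u - v` split into
those attached only to `u`, those attached only to `v`, and a nonempty part attached to both, with
`m₁`, `m₂` and `c` vertices, so `m₁ + m₂ + c = n - 2`. Expanding at `u` and `v` and bounding each
ratio reduces `I(G, -y) ≤ 0` to `a_c + a_{m₁+1} + a_{m₂+1} ≤ 2`, which follows from convexity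
(`CycleRatio.add_add_le`). This contradicts positivity (`not_all_pos`).
-/


open Polynomial SimpleGraph

/-- A finset of vertices is independent: pairwise nonadjacent. -/
def IsIndepFinset {V : Type*} (G : SimpleGraph V) (s : Finset V) : Prop :=
  ∀ u ∈ s, ∀ v ∈ s, ¬ G.Adj u v

open Classical in
/-- The independence polynomial of a finite graph, with real coefficients. -/
noncomputable def indepPoly {V : Type*} [Fintype V] (G : SimpleGraph V) : Polynomial ℝ :=
  ∑ s : Finset V, if IsIndepFinset G s then (X : Polynomial ℝ) ^ s.card else 0

/-- `xi G` : the largest real root of the independence polynomial of `G`. -/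
noncomputable def xi {V : Type*} [Fintype V] (G : SimpleGraph V) : ℝ :=
  sSup {x : ℝ | (indepPoly G).eval x = 0}

/-- `Pre H G` (`H ⪯ G`) : `I(H,x) ≥ I(G,x)` for all `x ∈ [ξ(G), 0]`. -/
def Pre {V W : Type*} [Fintype V] [Fintype W] (H : SimpleGraph W) (G : SimpleGraph V) : Prop :=
  ∀ x ∈ Set.Icc (xi G) 0, (indepPoly G).eval x ≤ (indepPoly H).eval x

/-- `SPre H G` (`H ≺ G`). -/
def SPre {V W : Type*} [Fintype V] [Fintype W] (H : SimpleGraph W) (G : SimpleGraph V) : Prop :=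
  Pre H G ∧ indepPoly H ≠ indepPoly G

open Classical in
/-- A graph is well-covered if all maximal independent sets have the same size. -/
def WellCovered {V : Type*} (G : SimpleGraph V) : Prop :=
  ∀ s t : Finset V,
    IsIndepFinset G s → (∀ v ∉ s, ¬ IsIndepFinset G (insert v s)) →
    IsIndepFinset G t → (∀ v ∉ t, ¬ IsIndepFinset G (insert v t)) →
    s.card = t.card

/-- A connected unicyclic graph: connected with as many edges as vertices. -/
def Unicyclic {V : Type*} [Fintype V] (G : SimpleGraph V) : Prop :=
  G.Connected ∧ G.edgeSet.ncard = Fintype.card V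

/-- The graph star (corona with `K₁`) of `G`: each vertex `inl v` gets a pendant
vertex `inr v`. -/
def corona {V : Type*} (G : SimpleGraph V) : SimpleGraph (V ⊕ V) :=
  SimpleGraph.fromRel (fun a b =>
    match a, b with
    | Sum.inl u, Sum.inl v => G.Adj u v
    | Sum.inl u, Sum.inr v => u = v
    | _, _ => False)

/-- `Ugraph n` (`U_n`, `n ≥ 3`): a triangle `0,1,2` with `n - 3` pendant vertices attached
to vertex `0`. -/
def Ugraph (n : ℕ) : SimpleGraph (Fin n) :=
  SimpleGraph.fromRel (fun i j => i.val = 0 ∨ (i.val = 1 ∧ j.val = 2))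

/-- `Dgraph n` (`D_n`, `n ≥ 4`): a path `0,1,...,n-1` plus the chord `{0,2}`, i.e. a
triangle with a path on `n - 3` vertices attached. -/
def Dgraph (n : ℕ) : SimpleGraph (Fin n) :=
  SimpleGraph.fromRel (fun i j => j.val = i.val + 1 ∨ (i.val = 0 ∧ j.val = 2))

/-- `starGraph n` (`S_n = K_{1,n-1}`): vertex `0` adjacent to all other vertices. -/
def starGraph (n : ℕ) : SimpleGraph (Fin n) :=
  SimpleGraph.fromRel (fun i _ => i.val = 0)

/-- `Mgraph n` (`M_n`, odd `n ≥ 5`): a triangle `0,1,2` with `(n-3)/2` paths of length two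
attached at vertex `0`; the middle vertices are the odd indices `3,5,...,n-2` and the leaf
attached to middle vertex `i` is `i + 1`. -/
def Mgraph (n : ℕ) : SimpleGraph (Fin n) :=
  SimpleGraph.fromRel (fun i j =>
    (i.val = 0 ∧ (j.val ≤ 2 ∨ j.val % 2 = 1)) ∨ (i.val = 1 ∧ j.val = 2) ∨
    (i.val % 2 = 1 ∧ 3 ≤ i.val ∧ j.val = i.val + 1))

/-- `SPgraph g k ℓ` (`G(g,k,ℓ)`, for `g ∈ {3,5}` and `k + ℓ ≥ 1`): a cycle on the vertices
`0,...,g-1`, a copy of `P_k*` on the vertices `g,...,g+2k-1` (path vertices at even offsets,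
each followed by its pendant vertex) joined to the cycle vertex `0` by an edge to the
path end `g`, and a copy of `P_ℓ*` on the vertices `g+2k,...,g+2k+2ℓ-1` joined to the cycle
vertex `2` by an edge to the path end `g+2k`. -/
def SPgraph (g k ℓ : ℕ) : SimpleGraph (Fin (g + 2*k + 2*ℓ)) :=
  SimpleGraph.fromRel (fun i j =>
    (i.val < g ∧ j.val < g ∧ (j.val = i.val + 1 ∨ (i.val = 0 ∧ j.val = g - 1))) ∨
    (i.val = 0 ∧ 0 < k ∧ j.val = g) ∨
    (g ≤ i.val ∧ i.val < g + 2*k ∧ (i.val - g) % 2 = 0 ∧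
      (j.val = i.val + 1 ∨ (j.val = i.val + 2 ∧ j.val < g + 2*k))) ∨
    (i.val = 2 ∧ 0 < ℓ ∧ j.val = g + 2*k) ∨
    (g + 2*k ≤ i.val ∧ (i.val - (g + 2*k)) % 2 = 0 ∧
      (j.val = i.val + 1 ∨ j.val = i.val + 2)))

/-- `Gtree n` (`G_{2n}`, `n ≥ 5`): the tree on `2n` vertices with path `v_1 … v_n` at
indices `0,…,n-1`, `z_1` at index `n`, `y_1, y_2` at `n+1, n+2`, `x_1, x_2` at `n+3, n+4`
(with `v_3 z_1`, `v_3 y_1`, `y_1 y_2`, `v_5 x_1`, `x_1 x_2` edges), and pendant vertices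
`w_j` at index `n + j - 1` attached to `v_j` for `6 ≤ j ≤ n`. -/
def Gtree (n : ℕ) : SimpleGraph (Fin (2*n)) :=
  SimpleGraph.fromRel (fun a b =>
    (a.val + 1 = b.val ∧ b.val < n) ∨
    (a.val = 2 ∧ (b.val = n ∨ b.val = n + 1)) ∨
    (a.val = n + 1 ∧ b.val = n + 2) ∨
    (a.val = 4 ∧ b.val = n + 3) ∨
    (a.val = n + 3 ∧ b.val = n + 4) ∨
    (5 ≤ a.val ∧ a.val < n ∧ b.val = n + a.val))


/-! ### Local evaluations of the independence polynomial -/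

open Classical in
/-- `indepSum G y S` is the value at `-y` of the independence polynomial of the subgraph of `G`
induced by `S`. Working with subsets of one fixed vertex type avoids passing to subtypes. -/
noncomputable def indepSum {V : Type*} (G : SimpleGraph V) (y : ℝ) (S : Finset V) : ℝ :=
  ∑ T ∈ S.powerset, if IsIndepFinset G T then (-y) ^ T.card else 0

open Classical in
/-- The vertices of `S` that are not adjacent to `v`. -/
noncomputable def away {V : Type*} (G : SimpleGraph V) (v : V) (S : Finset V) : Finset V :=
  S.filter fun w => ¬ G.Adj v w

section Basic

variable {V : Type*} {G : SimpleGraph V} {y : ℝ} {S T : Finset V} {u v w : V}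

lemma mem_away : w ∈ away G v S ↔ w ∈ S ∧ ¬ G.Adj v w := by
  classical
  simp [away]

lemma away_subset : away G v S ⊆ S := fun _ h => (mem_away.1 h).1

lemma eval_indepPoly [Fintype V] (x : ℝ) :
    (indepPoly G).eval x = indepSum G (-x) Finset.univ := by
  classical
  simp only [indepPoly, indepSum, eval_finsetSum, Finset.powerset_univ, neg_neg]
  refine Finset.sum_congr rfl fun s _ => ?_
  split_ifs <;> simp

lemma indepSum_empty : indepSum G y ∅ = 1 := by
  simp [indepSum, IsIndepFinset]

/-- The deletion recurrence `I(G) = I(G - v) + x I(G - N[v])` at `x = -y`. -/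
lemma indepSum_insert [DecidableEq V] (hv : v ∉ S) :
    indepSum G y (insert v S) = indepSum G y S - y * indepSum G y (away G v S) := by
  classical
  unfold indepSum
  rw [Finset.sum_powerset_insert hv, sub_eq_add_neg, ← neg_mul, Finset.mul_sum]
  congr 1
  symm
  rw [← Finset.sum_subset (Finset.powerset_mono.2 (away_subset (G := G) (v := v) (S := S)))]
  · refine Finset.sum_congr rfl fun T hT => ?_
    rw [Finset.mem_powerset] at hT
    have hvT : v ∉ T := fun h => hv (away_subset (hT h))
    have hiff : IsIndepFinset G (insert v T) ↔ IsIndepFinset G T := by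
      constructor
      · intro h a ha b hb
        exact h a (Finset.mem_insert_of_mem ha) b (Finset.mem_insert_of_mem hb)
      · intro h a ha b hb
        rcases Finset.mem_insert.1 ha with rfl | ha' <;>
          rcases Finset.mem_insert.1 hb with rfl | hb'
        · exact G.loopless.irrefl _
        · exact (mem_away.1 (hT hb')).2
        · exact fun h => (mem_away.1 (hT ha')).2 h.symm
        · exact h a ha' b hb'
    simp only [hiff, Finset.card_insert_of_notMem hvT, pow_succ']
    split_ifs <;> simp
  · intro T hT hT'
    rw [Finset.mem_powerset] at hT hT'
    rw [if_neg]
    intro h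
    refine hT' fun w hw => mem_away.2 ⟨hT hw, ?_⟩
    exact h v (Finset.mem_insert_self _ _) w (Finset.mem_insert_of_mem hw)

lemma indepSum_erase [DecidableEq V] (hv : v ∈ S) :
    indepSum G y S = indepSum G y (S.erase v) - y * indepSum G y (away G v (S.erase v)) := by
  conv_lhs => rw [← Finset.insert_erase hv]
  exact indepSum_insert (Finset.notMem_erase _ _)

lemma indepSum_singleton : indepSum G y {v} = 1 - y := by
  classical
  have := indepSum_insert (G := G) (y := y) (S := ∅) (v := v) (by simp)
  simpa [indepSum_empty, away] using this

lemma indepSum_zero : indepSum G 0 S = 1 := by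
  classical
  induction S using Finset.induction_on with
  | empty => exact indepSum_empty
  | insert v S hv ih => rw [indepSum_insert hv, ih]; ring

lemma continuous_indepSum : Continuous fun y => indepSum G y S := by
  classical
  unfold indepSum
  refine continuous_finsetSum _ fun T _ => ?_
  split_ifs <;> fun_prop

lemma indepSum_of_nonpos (hy : y ≤ 0) : 1 ≤ indepSum G y S := by
  classical
  unfold indepSum
  have := Finset.single_le_sum (s := S.powerset)
    (f := fun T => if IsIndepFinset G T then (-y) ^ T.card else 0)
    (fun T _ => by split_ifs; exacts [pow_nonneg (by linarith) _, le_rfl])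
    (Finset.empty_mem_powerset S)
  simpa [IsIndepFinset] using this

/-- The independence polynomial is multiplicative over pieces with no edge between them. -/
lemma indepSum_union [DecidableEq V] (hd : Disjoint S T)
    (hs : ∀ a ∈ S, ∀ b ∈ T, ¬ G.Adj a b) :
    indepSum G y (S ∪ T) = indepSum G y S * indepSum G y T := by
  induction S using Finset.strongInduction with
  | H S ih =>
    rcases S.eq_empty_or_nonempty with rfl | ⟨v, hv⟩
    · simp [indepSum_empty]
    have hvT : v ∉ T := Finset.disjoint_left.1 hd hv
    have herase : (S ∪ T).erase v = S.erase v ∪ T := by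
      rw [Finset.erase_union_distrib, Finset.erase_eq_of_notMem hvT]
    have haway : away G v (S.erase v ∪ T) = away G v (S.erase v) ∪ T := by
      ext w
      simp only [mem_away, Finset.mem_union]
      have := hs v hv w
      tauto
    have hsub : S.erase v ⊂ S := Finset.erase_ssubset hv
    have hsub' : away G v (S.erase v) ⊂ S := lt_of_le_of_lt away_subset hsub
    rw [indepSum_erase (Finset.mem_union_left _ hv), herase, haway,
      ih _ hsub (hd.mono_left hsub.1) fun a ha => hs a (hsub.1 ha),
      ih _ hsub' (hd.mono_left hsub'.1) fun a ha => hs a (hsub'.1 ha),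
      indepSum_erase (y := y) hv]
    ring

end Basic

section Nonneg

variable {V : Type*} {G : SimpleGraph V} {y : ℝ} {S T : Finset V}

lemma indepSum_anti (hy : 0 ≤ y) (hF : ∀ S, 0 ≤ indepSum G y S) (h : S ⊆ T) :
    indepSum G y T ≤ indepSum G y S := by
  classical
  have key : ∀ R : Finset V, indepSum G y (R ∪ S) ≤ indepSum G y S := by
    intro R
    induction R using Finset.induction_on with
    | empty => simp
    | insert v R hv ih =>
      rw [Finset.insert_union]
      by_cases hm : v ∈ R ∪ S
      · rwa [Finset.insert_eq_of_mem hm]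
      · rw [indepSum_insert hm]
        have := mul_nonneg hy (hF (away G v (R ∪ S)))
        linarith
  simpa [Finset.union_eq_left.2 h] using key T

lemma indepSum_union_le [DecidableEq V] (hy : 0 ≤ y) (hy1 : y ≤ 1)
    (hF : ∀ S, 0 ≤ indepSum G y S) (R : Finset V) (hd : Disjoint R S) :
    indepSum G y (R ∪ S) ≤ (1 - y) ^ R.card * indepSum G y S := by
  induction R using Finset.induction_on with
  | empty => simp
  | insert v R hv ih =>
    rw [Finset.disjoint_insert_left] at hd
    rw [Finset.insert_union, indepSum_insert (by simp [hv, hd.1]),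
      Finset.card_insert_of_notMem hv, pow_succ]
    have h1 := indepSum_anti hy hF (away_subset (G := G) (v := v) (S := R ∪ S))
    have h2 := ih hd.2
    nlinarith

lemma indepSum_le_pow (hy : 0 ≤ y) (hy1 : y ≤ 1) (hF : ∀ S, 0 ≤ indepSum G y S) {k : ℕ}
    (hk : k ≤ S.card) : indepSum G y S ≤ (1 - y) ^ k := by
  classical
  have h := indepSum_union_le hy hy1 hF S (Finset.disjoint_empty_right S)
  rw [Finset.union_empty, indepSum_empty, mul_one] at h
  exact h.trans (pow_le_pow_of_le_one (by linarith) (by linarith) hk)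

end Nonneg

/-! ### The largest root -/

/-- If some induced subgraph has a nonpositive value at `-t`, then at the first parameter `t₁`
where this happens all values are nonnegative and the value of the whole graph vanishes:
by the deletion recurrence a zero at `S` propagates to every superset of `S`. -/
lemma exists_first_root {V : Type*} [Fintype V] {G : SimpleGraph V} {t : ℝ} (ht : 0 ≤ t)
    {S : Finset V} (hS : indepSum G t S ≤ 0) :
    ∃ t₁, 0 < t₁ ∧ t₁ ≤ t ∧ indepSum G t₁ Finset.univ = 0 ∧ (∀ S, 0 ≤ indepSum G t₁ S) ∧
      ∀ s, s < t₁ → ∀ S, 0 < indepSum G s S := by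
  classical
  let B : Set ℝ := Set.Icc 0 t ∩ ⋃ S : Finset V, {s | indepSum G s S ≤ 0}
  have hBc : IsCompact B := by
    refine isCompact_Icc.inter_right (isClosed_iUnion_of_finite fun S => ?_)
    exact isClosed_le continuous_indepSum continuous_const
  have hBn : B.Nonempty := ⟨t, ⟨ht, le_rfl⟩, Set.mem_iUnion.2 ⟨S, hS⟩⟩
  obtain ⟨t₁, ⟨ht₁, hm⟩, hmin⟩ := hBc.exists_isLeast hBn
  obtain ⟨S₁, hS₁⟩ := Set.mem_iUnion.1 hm
  replace hS₁ : indepSum G t₁ S₁ ≤ 0 := hS₁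
  have hbefore : ∀ s, s < t₁ → ∀ S, 0 < indepSum G s S := by
    intro s hs S
    rcases le_or_gt 0 s with h0 | h0
    · by_contra hcon
      have : s ∈ B := ⟨⟨h0, hs.le.trans ht₁.2⟩, Set.mem_iUnion.2 ⟨S, not_lt.1 hcon⟩⟩
      exact absurd (hmin this) (not_le.2 hs)
    · linarith [indepSum_of_nonpos (G := G) (S := S) h0.le]
  have hpos : 0 < t₁ := by
    refine lt_of_le_of_ne ht₁.1 fun h => ?_
    rw [← h, indepSum_zero] at hS₁
    linarith
  have hnn : ∀ S, 0 ≤ indepSum G t₁ S := by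
    intro S
    have hcl : t₁ ∈ closure (Set.Iio t₁) := by simp
    have : closure (Set.Iio t₁) ⊆ {s | 0 ≤ indepSum G s S} :=
      closure_minimal (fun s hs => (hbefore s hs S).le)
        (isClosed_le continuous_const continuous_indepSum)
    exact this hcl
  refine ⟨t₁, hpos, ht₁.2, ?_, hnn, hbefore⟩
  exact le_antisymm ((indepSum_anti hpos.le hnn (Finset.subset_univ S₁)).trans hS₁) (hnn _)

/-- `-xi G` is the first positive parameter at which the independence polynomial vanishes, and
also the first one at which the polynomial of some induced subgraph fails to be positive. -/
lemma exists_xi {V : Type*} [Fintype V] [Nonempty V] (G : SimpleGraph V) :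
    ∃ y, xi G = -y ∧ 0 < y ∧ y ≤ 1 ∧ indepSum G y Finset.univ = 0 ∧ (∀ S, 0 ≤ indepSum G y S) ∧
      ∀ s, s < y → ∀ S, 0 < indepSum G s S := by
  obtain ⟨v⟩ := ‹Nonempty V›
  obtain ⟨y, h0, h1, hroot, hnn, hb⟩ := exists_first_root (G := G) (t := 1) zero_le_one
    (S := {v}) (by simp [indepSum_singleton])
  refine ⟨y, ?_, h0, h1, hroot, hnn, hb⟩
  refine IsGreatest.csSup_eq ⟨?_, ?_⟩
  · simpa [eval_indepPoly] using hroot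
  · intro x hx
    by_contra hcon
    have hx' : indepSum G (-x) Finset.univ = 0 := by rw [← eval_indepPoly]; exact hx
    exact absurd hx' (hb (-x) (by linarith) _).ne'

/-! ### The upper bound: comparison with `U_n` -/

/-- Every nonempty induced subgraph of a forest has a vertex with at most one neighbour in it. -/
lemma exists_leaf {V : Type*} [Finite V] {T : SimpleGraph V} (hT : T.IsAcyclic) {S : Finset V}
    (hS : S.Nonempty) : ∃ v ∈ S, ∃ z, ∀ a ∈ S, T.Adj v a → a = z := by
  have : Nonempty (S : Set V) := hS.to_subtype
  have hac := hT.induce (S : Set V)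
  obtain ⟨u, v, p, hp, hmax⟩ :=
    Walk.exists_isPath_forall_isPath_length_le_length (T.induce (S : Set V))
  refine ⟨u, u.2, p.snd, fun a ha h => ?_⟩
  -- A neighbour of the end `u` off the longest path `p` would extend `p`.
  have hadj : (T.induce (S : Set V)).Adj u ⟨a, ha⟩ := h
  have key : (⟨a, ha⟩ : (S : Set V)) = p.snd := by
    apply hac.eq_snd_of_adj_start hp hadj
    have : ¬(p.cons hadj.symm).IsPath := by grind [Walk.length_cons]
    grind [hp.cons]
  exact congrArg Subtype.val key

/-- Among forests on a given number of vertices the star is extremal: removing a leaf keeps the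
bound `(1 - y) ^ (n - 1) - y`. That `S` induces a forest is expressed by the existence of leaves
in all its nonempty subsets. -/
lemma forest_bound {V : Type*} {G : SimpleGraph V} {y : ℝ}
    (hy : 0 ≤ y) (hy1 : y ≤ 1) (hF : ∀ S, 0 ≤ indepSum G y S) (k : ℕ) :
    ∀ S : Finset V, S.card = k + 1 →
      (∀ R ⊆ S, R.Nonempty → ∃ v ∈ R, ∃ z, ∀ a ∈ R, G.Adj v a → a = z) →
      (1 - y) ^ k - y ≤ indepSum G y S := by
  classical
  induction k with
  | zero =>
    intro S hS _
    obtain ⟨v, rfl⟩ := Finset.card_eq_one.1 hS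
    simp [indepSum_singleton]
  | succ k ih =>
    intro S hS hleaf
    obtain ⟨v, hv, z, hz⟩ := hleaf S subset_rfl (Finset.card_pos.1 (by omega))
    have hc : (S.erase v).card = k + 1 := by rw [Finset.card_erase_of_mem hv, hS]; rfl
    have h1 := ih _ hc fun R hR => hleaf R (hR.trans (Finset.erase_subset _ _))
    have hsub : (S.erase v).erase z ⊆ away G v (S.erase v) := by
      intro w hw
      simp only [Finset.mem_erase] at hw
      exact mem_away.2 ⟨Finset.mem_erase.2 hw.2, fun h => hw.1 (hz w hw.2.2 h)⟩
    have hcz : k ≤ ((S.erase v).erase z).card := by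
      have := Finset.pred_card_le_card_erase (s := S.erase v) (a := z)
      omega
    have h2 := (indepSum_anti hy hF hsub).trans (indepSum_le_pow hy hy1 hF hcz)
    rw [indepSum_erase hv, pow_succ]
    nlinarith

lemma indepSum_of_indep {V : Type*} {G : SimpleGraph V} {y : ℝ} {S : Finset V}
    (h : IsIndepFinset G S) : indepSum G y S = (1 - y) ^ S.card := by
  classical
  induction S using Finset.induction_on with
  | empty => simp [indepSum_empty]
  | insert v S hv ih =>
    have haway : away G v S = S := by
      ext w
      rw [mem_away]
      exact ⟨fun h => h.1, fun hw => ⟨hw,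
        h v (Finset.mem_insert_self _ _) w (Finset.mem_insert_of_mem hw)⟩⟩
    rw [indepSum_insert hv, haway, Finset.card_insert_of_notMem hv, ih fun a ha b hb =>
      h a (Finset.mem_insert_of_mem ha) b (Finset.mem_insert_of_mem hb)]
    ring

lemma indepSum_pair {V : Type*} [DecidableEq V] {G : SimpleGraph V} {y : ℝ} {a b : V}
    (hab : G.Adj a b) : indepSum G y {a, b} = 1 - 2 * y := by
  have haway : away G a {b} = ∅ := by
    ext w
    simp only [mem_away, Finset.mem_singleton, Finset.notMem_empty, iff_false]
    rintro ⟨rfl, h⟩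
    exact h hab
  rw [indepSum_insert (by simpa using hab.ne), haway, indepSum_empty, indepSum_singleton]
  ring

/-- A graph consisting of a forest `T` and one further edge `uv` satisfies the bound attained by
`U_n`. A leaf `w` of `T` away from `uv` is removed by induction, since what is left after deleting
`w` and its neighbour still has an edge (unless all edges pass through `u`, or all through `v`);
if the leaf is `u` or `v`, its deletion leaves a forest and `forest_bound` applies. -/
lemma unicyclic_bound {V : Type*} [Finite V] {G T : SimpleGraph V} (hT : T.IsAcyclic) {u v : V}
    (huv : G.Adj u v)
    (hGT : ∀ a b, G.Adj a b → T.Adj a b ∨ (a = u ∧ b = v) ∨ (a = v ∧ b = u)) {y : ℝ}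
    (hy : 0 ≤ y) (hy1 : y ≤ 1) (hF : ∀ S, 0 ≤ indepSum G y S) (k : ℕ) :
    ∀ S : Finset V, S.card = k + 3 → u ∈ S → v ∈ S →
      (1 - y) ^ k * (1 - 2 * y) - y ≤ indepSum G y S := by
  classical
  -- The case where every edge inside `S` passes through one vertex `c`.
  have star : ∀ (k : ℕ) (S : Finset V) (c : V), S.card = k + 3 → c ∈ S →
      IsIndepFinset G (S.erase c) → (1 - y) ^ k * (1 - 2 * y) - y ≤ indepSum G y S := by
    intro k S c hS hc hind
    have h1 := indepSum_le_pow (S := away G c (S.erase c)) hy hy1 hF (Nat.zero_le _)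
    rw [indepSum_erase hc, indepSum_of_indep hind, Finset.card_erase_of_mem hc, hS,
      show k + 3 - 1 = k + 2 from rfl, pow_add]
    have h2 : 0 ≤ (1 - y) ^ k := pow_nonneg (by linarith) _
    nlinarith [mul_nonneg h2 (sq_nonneg y)]
  -- The case where one end `c` of the extra edge `cd` is a leaf of the forest.
  have cyc : ∀ (k : ℕ) (S : Finset V) (c d z : V), S.card = k + 3 → c ∈ S →
      (∀ a b, G.Adj a b → T.Adj a b ∨ (a = c ∧ b = d) ∨ (a = d ∧ b = c)) →
      (∀ a ∈ S, T.Adj c a → a = z) → (1 - y) ^ k * (1 - 2 * y) - y ≤ indepSum G y S := by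
    intro k S c d z hS hc hcd hz
    have hcard : (S.erase c).card = k + 1 + 1 := by rw [Finset.card_erase_of_mem hc, hS]; rfl
    have h1 := forest_bound hy hy1 hF (k + 1) (S.erase c) hcard (by
      intro R hR hRn
      obtain ⟨w, hw, x, hx⟩ := exists_leaf hT hRn
      refine ⟨w, hw, x, fun a ha h => hx a ha ?_⟩
      rcases hcd w a h with h | ⟨rfl, -⟩ | ⟨-, rfl⟩
      · exact h
      · exact absurd (hR hw) (Finset.notMem_erase _ _)
      · exact absurd (hR ha) (Finset.notMem_erase _ _))
    have hsub : ((S.erase c).erase d).erase z ⊆ away G c (S.erase c) := by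
      intro w hw
      simp only [Finset.mem_erase] at hw
      refine mem_away.2 ⟨Finset.mem_erase.2 hw.2.2, fun h => ?_⟩
      rcases hcd c w h with h | ⟨-, h⟩ | ⟨-, h⟩
      · exact hw.1 (hz w hw.2.2.2 h)
      · exact hw.2.1 h
      · exact hw.2.2.1 h
    have hcz : k ≤ (((S.erase c).erase d).erase z).card := by
      have := Finset.pred_card_le_card_erase (s := S.erase c) (a := d)
      have := Finset.pred_card_le_card_erase (s := (S.erase c).erase d) (a := z)
      omega
    have h2 := (indepSum_anti hy hF hsub).trans (indepSum_le_pow hy hy1 hF hcz)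
    rw [indepSum_erase hc]
    rw [pow_succ] at h1
    nlinarith
  induction k with
  | zero =>
    intro S hS hu hv
    by_cases hsu : IsIndepFinset G (S.erase u)
    · exact star 0 S u hS hu hsu
    by_cases hsv : IsIndepFinset G (S.erase v)
    · exact star 0 S v hS hv hsv
    obtain ⟨w, hw, z, hz⟩ := exists_leaf hT (S := S) ⟨u, hu⟩
    by_cases hwu : w = u
    · subst hwu
      exact cyc 0 S w v z hS hu hGT hz
    by_cases hwv : w = v
    · subst hwv
      exact cyc 0 S w u z hS hv (fun a b h => (hGT a b h).imp_right Or.symm) hz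
    exfalso
    have hSeq : S = {u, v, w} := by
      symm
      refine Finset.eq_of_subset_of_card_le ?_ ?_
      · simp [Finset.insert_subset_iff, hu, hv, hw]
      · rw [hS, Finset.card_eq_three.2 ⟨u, v, w, huv.ne, Ne.symm hwu, Ne.symm hwv, rfl⟩]
    have edge : ∀ c d : V, S = {c, d, w} → ¬ IsIndepFinset G (S.erase c) → G.Adj w d := by
      intro c d hScd hni
      by_contra hwd
      refine hni fun a ha b hb hab => ?_
      rw [hScd] at ha hb
      simp only [Finset.mem_erase, Finset.mem_insert, Finset.mem_singleton] at ha hb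
      rcases ha with ⟨h1, h2 | rfl | rfl⟩
      · exact h1 h2
      · rcases hb with ⟨h3, h4 | rfl | rfl⟩
        exacts [h3 h4, hab.ne rfl, hwd hab.symm]
      · rcases hb with ⟨h3, h4 | rfl | rfl⟩
        exacts [h3 h4, hwd hab, hab.ne rfl]
    have e1 := edge u v hSeq hsu
    have e2 := edge v u (by rw [hSeq, Finset.insert_comm]) hsv
    have toT : ∀ d, G.Adj w d → T.Adj w d := fun d h =>
      (hGT w d h).resolve_right (by rintro (⟨h, -⟩ | ⟨h, -⟩); exacts [hwu h, hwv h])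
    exact huv.ne ((hz u hu (toT u e2)).trans (hz v hv (toT v e1)).symm)
  | succ k ih =>
    intro S hS hu hv
    by_cases hsu : IsIndepFinset G (S.erase u)
    · exact star _ S u hS hu hsu
    by_cases hsv : IsIndepFinset G (S.erase v)
    · exact star _ S v hS hv hsv
    obtain ⟨w, hw, z, hz⟩ := exists_leaf hT (S := S) ⟨u, hu⟩
    by_cases hwu : w = u
    · subst hwu
      exact cyc _ S w v z hS hu hGT hz
    by_cases hwv : w = v
    · subst hwv
      exact cyc _ S w u z hS hv (fun a b h => (hGT a b h).imp_right Or.symm) hz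
    have hzG : ∀ d ∈ S, G.Adj w d → d = z := fun d hd h => hz d hd
      ((hGT w d h).resolve_right (by rintro (⟨h, -⟩ | ⟨h, -⟩); exacts [hwu h, hwv h]))
    have hcard : (S.erase w).card = k + 3 := by rw [Finset.card_erase_of_mem hw, hS]; rfl
    have h1 := ih (S.erase w) hcard (Finset.mem_erase.2 ⟨Ne.symm hwu, hu⟩)
      (Finset.mem_erase.2 ⟨Ne.symm hwv, hv⟩)
    set X := (S.erase w).erase z with hX
    have hsub : X ⊆ away G w (S.erase w) := by
      intro a ha
      simp only [hX, Finset.mem_erase] at ha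
      exact mem_away.2 ⟨Finset.mem_erase.2 ha.2, fun h => ha.1 (hzG a ha.2.2 h)⟩
    have hXc : k + 2 ≤ X.card := by
      have := Finset.pred_card_le_card_erase (s := S.erase w) (a := z)
      rw [← hX] at this
      omega
    -- An edge that survives the deletion of `w` and `z`.
    have hedge : ∃ a ∈ X, ∃ b ∈ X, G.Adj a b := by
      have avoid : ¬ IsIndepFinset G (S.erase z) → ∃ a ∈ X, ∃ b ∈ X, G.Adj a b := by
        intro hni
        simp only [IsIndepFinset, not_forall, not_not, Finset.mem_erase] at hni
        obtain ⟨a, ha, b, hb, hab⟩ := hni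
        refine ⟨a, ?_, b, ?_, hab⟩
        · refine Finset.mem_erase.2 ⟨ha.1, Finset.mem_erase.2 ⟨?_, ha.2⟩⟩
          rintro rfl
          exact hb.1 (hzG b hb.2 hab)
        · refine Finset.mem_erase.2 ⟨hb.1, Finset.mem_erase.2 ⟨?_, hb.2⟩⟩
          rintro rfl
          exact ha.1 (hzG a ha.2 hab.symm)
      by_cases hzu : z = u
      · exact avoid (hzu ▸ hsu)
      by_cases hzv : z = v
      · exact avoid (hzv ▸ hsv)
      exact ⟨u, by simp [hX, hu, Ne.symm hzu, Ne.symm hwu], v,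
        by simp [hX, hv, Ne.symm hzv, Ne.symm hwv], huv⟩
    obtain ⟨a, ha, b, hb, hab⟩ := hedge
    have hpair : ({a, b} : Finset V) ⊆ X := by simp [Finset.insert_subset_iff, ha, hb]
    have h2 := indepSum_union_le hy hy1 hF (X \ {a, b}) (S := {a, b}) Finset.sdiff_disjoint
    rw [Finset.sdiff_union_of_subset hpair, Finset.card_sdiff_of_subset hpair,
      Finset.card_pair hab.ne] at h2
    have h3 : (1 - y) ^ (X.card - 2) ≤ (1 - y) ^ k :=
      pow_le_pow_of_le_one (by linarith) (by linarith) (by omega)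
    have h4 := mul_le_mul_of_nonneg_right h3 (hF {a, b})
    have h5 := (indepSum_anti hy hF hsub).trans (h2.trans h4)
    rw [indepSum_pair hab] at h5
    rw [indepSum_erase hw, pow_succ]
    nlinarith

lemma indepSum_Ugraph (m : ℕ) (y : ℝ) :
    indepSum (Ugraph (m + 3)) y Finset.univ = (1 - y) ^ m * (1 - 2 * y) - y := by
  set G := Ugraph (m + 3) with hG
  have hadj : ∀ a b : Fin (m + 3), G.Adj a b ↔ a.val ≠ b.val ∧
      ((a.val = 0 ∨ (a.val = 1 ∧ b.val = 2)) ∨ (b.val = 0 ∨ (b.val = 1 ∧ a.val = 2))) := by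
    intro a b
    simp only [hG, Ugraph, fromRel_adj, ne_eq, Fin.ext_iff]
  obtain ⟨o, ho⟩ : ∃ o : Fin (m + 3), o.val = 0 := ⟨⟨0, by omega⟩, rfl⟩
  obtain ⟨i, hi⟩ : ∃ i : Fin (m + 3), i.val = 1 := ⟨⟨1, by omega⟩, rfl⟩
  obtain ⟨j, hj⟩ : ∃ j : Fin (m + 3), j.val = 2 := ⟨⟨2, by omega⟩, rfl⟩
  have haway0 : away G o (Finset.univ.erase o) = ∅ := by
    ext w
    simp only [mem_away, hadj, Finset.mem_erase, Finset.mem_univ, and_true, ne_eq, Fin.ext_iff,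
      Finset.notMem_empty, iff_false]
    omega
  have m1 : i ∈ Finset.univ.erase o := by simp [Fin.ext_iff, hi, ho]
  set R := (Finset.univ.erase o).erase i with hR
  have hind : IsIndepFinset G R := by
    intro a ha b hb
    simp only [hR, Finset.mem_erase, Finset.mem_univ, and_true, ne_eq, Fin.ext_iff] at ha hb
    rw [hadj]
    omega
  have haway1 : away G i R = R.erase j := by
    ext w
    simp only [mem_away, hadj, hR, Finset.mem_erase, Finset.mem_univ, and_true, ne_eq, Fin.ext_iff]
    omega
  have m2 : j ∈ R := by simp [hR, Fin.ext_iff, ho, hi, hj]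
  have cR : R.card = m + 1 := by
    rw [hR, Finset.card_erase_of_mem m1, Finset.card_erase_of_mem (Finset.mem_univ _)]
    simp
  have cR2 : (R.erase j).card = m := by rw [Finset.card_erase_of_mem m2, cR]; rfl
  rw [indepSum_erase (Finset.mem_univ o), haway0, indepSum_empty, indepSum_erase m1, haway1,
    indepSum_of_indep hind, indepSum_of_indep fun a ha b hb =>
      hind a (Finset.mem_of_mem_erase ha) b (Finset.mem_of_mem_erase hb), cR, cR2]
  ring

lemma Unicyclic.exists_not_isBridge {V : Type*} [Fintype V] {G : SimpleGraph V}
    (hG : Unicyclic G) : ∃ u v, G.Adj u v ∧ ¬ G.IsBridge s(u, v) := by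
  by_contra hcon
  push Not at hcon
  have hac : G.IsAcyclic := isAcyclic_iff_forall_adj_isBridge.2 fun u v h => hcon u v h
  have h := (isTree_iff_connected_and_card.1 ⟨hG.1, hac⟩).2
  have h2 := hG.2
  rw [Nat.card_coe_set_eq, Nat.card_eq_fintype_card] at h
  omega

lemma xi_le_xi_Ugraph {V : Type*} [Fintype V] {n : ℕ} (hn : 3 ≤ n) {G : SimpleGraph V}
    (hcard : Fintype.card V = n) (hG : Unicyclic G) : xi G ≤ xi (Ugraph n) := by
  classical
  obtain ⟨u, v, huv, hbr⟩ := hG.exists_not_isBridge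
  have : Nonempty V := ⟨u⟩
  have hconn := hG.1.connected_delete_edge_of_not_isBridge hbr
  have htree : (G.deleteEdges {s(u, v)}).IsTree := by
    refine isTree_iff_connected_and_card.2 ⟨hconn, ?_⟩
    rw [Nat.card_coe_set_eq, Nat.card_eq_fintype_card, edgeSet_deleteEdges,
      ← hG.2]
    exact Set.ncard_sdiff_singleton_add_one ((mem_edgeSet G).2 huv)
  obtain ⟨y, hxi, h0, h1, hroot, hnn, -⟩ := exists_xi G
  obtain ⟨m, rfl⟩ : ∃ m, n = m + 3 := ⟨n - 3, by omega⟩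
  have hGT : ∀ a b, G.Adj a b →
      (G.deleteEdges {s(u, v)}).Adj a b ∨ (a = u ∧ b = v) ∨ (a = v ∧ b = u) := by
    intro a b hab
    simp only [deleteEdges_adj, Set.mem_singleton_iff, Sym2.eq_iff]
    tauto
  have hb := unicyclic_bound htree.isAcyclic huv hGT h0.le h1 hnn m Finset.univ
    (by rw [Finset.card_univ, hcard]) (Finset.mem_univ _) (Finset.mem_univ _)
  rw [hroot, ← indepSum_Ugraph] at hb
  obtain ⟨z, hxi', -, -, -, -, hz⟩ := exists_xi (Ugraph (m + 3))
  rw [hxi, hxi', neg_le_neg_iff]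
  by_contra hcon
  exact absurd hb (not_le.2 (hz y (not_le.1 hcon) _))

/-! ### The ratio sequence of paths at the largest root of a cycle -/

/-- `CycleRatio n y a` records that `a k` is the ratio `I(P_k, -y) / I(P_{k-1}, -y)` for
`k ≤ n - 1`, at the parameter `y` for which `-y` is the largest root of `I(C_n)`;
the vanishing of `I(C_n)` amounts to `a (n - 1) = 1 / 2`. -/
structure CycleRatio (n : ℕ) (y : ℝ) (a : ℕ → ℝ) : Prop where
  ypos : 0 < y
  zero : a 0 = 1
  step : ∀ k, k + 1 < n → a (k + 1) = 1 - y / a k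
  pos : ∀ k, k < n → 0 < a k
  half : a (n - 1) = 1 / 2

namespace CycleRatio

variable {n : ℕ} {y : ℝ} {a : ℕ → ℝ}

lemma succ_le (h : CycleRatio n y a) : ∀ k, k + 1 < n → a (k + 1) ≤ a k := by
  intro k
  induction k with
  | zero =>
    intro hk
    rw [h.step 0 hk, h.zero]
    linarith [h.ypos, div_one y]
  | succ k ih =>
    intro hk
    have h1 := ih (by omega)
    have h2 : y / a k ≤ y / a (k + 1) :=
      div_le_div_of_nonneg_left h.ypos.le (h.pos _ (by omega)) h1
    rw [h.step (k + 1) hk]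
    linarith [h.step k (by omega)]

lemma anti (h : CycleRatio n y a) {i j : ℕ} (hij : i ≤ j) (hj : j < n) : a j ≤ a i := by
  induction j, hij using Nat.le_induction with
  | base => exact le_rfl
  | succ j _ ih => exact (h.succ_le j hj).trans (ih (by omega))

lemma half_le (h : CycleRatio n y a) {k : ℕ} (hk : k < n) : 1 / 2 ≤ a k :=
  h.half ▸ h.anti (by omega : k ≤ n - 1) (by omega)

lemma two_mul_y (h : CycleRatio n y a) (hn : 3 ≤ n) : a (n - 2) = 2 * y := by
  have h1 := h.step (n - 2) (by omega)
  rw [show n - 2 + 1 = n - 1 by omega, h.half] at h1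
  have h2 := h.pos (n - 2) (by omega)
  field_simp at h1
  linarith

lemma quarter_le (h : CycleRatio n y a) (hn : 3 ≤ n) : 1 / 4 ≤ y := by
  linarith [h.two_mul_y hn, h.half_le (by omega : n - 2 < n)]

lemma one_eq (h : CycleRatio n y a) (hn : 3 ≤ n) : a 1 = 1 - y := by
  rw [h.step 0 (by omega), h.zero, div_one]

/-- Supermultiplicativity. As all ratios are at least `1 / 2`, while `a 1 ≤ 3 / 4` and
`a 2 ≤ 2 / 3`, only `a 1 * a 1 ≤ a 2` needs a computation. -/
lemma mul_le (h : CycleRatio n y a) (hn : 3 ≤ n) {k l : ℕ} (hkl : k + l < n) :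
    a k * a l ≤ a (k + l) := by
  have hq := h.quarter_le hn
  have h1 := h.one_eq hn
  have h2 : a 2 = 1 - y / (1 - y) := by rw [h.step 1 (by omega), h1]
  have h1' := h.half_le (k := 1) (by omega)
  have h2' := h.half_le (k := 2) (by omega)
  have hpos : 0 < 1 - y := by linarith
  have h2m : a 2 * (1 - y) = 1 - 2 * y := by rw [h2]; field_simp; ring
  have hle2 : a 2 ≤ 2 / 3 := by
    by_contra hcon
    push Not at hcon
    nlinarith
  have big : ∀ k l, 1 ≤ k → 2 ≤ l → k + l < n → a k * a l ≤ a (k + l) := by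
    intro k l hk hl hkl
    have e1 : a k ≤ 3 / 4 := (h.anti hk (by omega)).trans (by linarith)
    have e2 : a l ≤ 2 / 3 := (h.anti hl (by omega)).trans hle2
    have e3 := h.half_le hkl
    have e4 := h.pos k (by omega)
    have e5 := h.pos l (by omega)
    nlinarith
  rcases Nat.eq_zero_or_pos k with rfl | hk
  · simp [h.zero]
  rcases Nat.eq_zero_or_pos l with rfl | hl
  · simp [h.zero]
  rcases Nat.lt_or_ge 1 l with hl2 | hl1
  · exact big k l hk hl2 hkl
  rcases Nat.lt_or_ge 1 k with hk2 | hk1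
  · rw [mul_comm, add_comm]
    exact big l k hl hk2 (by omega)
  obtain rfl : l = 1 := by omega
  obtain rfl : k = 1 := by omega
  rw [h1]
  have hy3 : y ≤ 1 / 3 := by nlinarith
  refine le_of_mul_le_mul_right ?_ hpos
  rw [h2m]
  nlinarith [mul_nonneg h.ypos.le h.ypos.le]

/-- Convexity: the decrements of `a` are nonincreasing as long as `a ≥ 1 / 2`. -/
lemma decrement_anti (h : CycleRatio n y a) {k : ℕ} (hk : k + 2 < n) :
    a (k + 1) - a (k + 2) ≤ a k - a (k + 1) := by
  have p0 := h.pos k (by omega)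
  have p1 := h.pos (k + 1) (by omega)
  have s1 := h.step k (by omega)
  have s2 := h.step (k + 1) hk
  have hd := h.succ_le k (by omega)
  have hh := h.half_le (k := k + 1) (by omega)
  have e : a (k + 1) - a (k + 2) = y / (a k * a (k + 1)) * (a k - a (k + 1)) := by
    have : a (k + 1) - a (k + 2) = y / a (k + 1) - y / a k := by rw [s2]; linarith
    rw [this]
    field_simp
  have hy : y = (1 - a (k + 1)) * a k := by
    rw [s1]
    field_simp
    ring
  have hle : y / (a k * a (k + 1)) ≤ 1 := by
    rw [div_le_one (mul_pos p0 p1)]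
    nlinarith
  rw [e]
  nlinarith

lemma decrement_anti' (h : CycleRatio n y a) {i j : ℕ} (hij : i ≤ j) (hj : j + 1 < n) :
    a j - a (j + 1) ≤ a i - a (i + 1) := by
  induction j, hij using Nat.le_induction with
  | base => exact le_rfl
  | succ j _ ih => exact (h.decrement_anti (by omega)).trans (ih (by omega))

lemma add_le (h : CycleRatio n y a) (c d : ℕ) (hcd : c + d + 1 < n) :
    a (c + 1) + a (d + 1) ≤ a 1 + a (c + d + 1) := by
  induction c with
  | zero => simp
  | succ c ih =>
    have h1 := ih (by omega)
    have h2 := h.decrement_anti' (i := c + 1) (j := c + d + 1) (by omega) (by omega)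
    rw [show c + 1 + d + 1 = c + d + 1 + 1 by omega]
    linarith

/-- By convexity the sum is largest at `(n - 2, 1, 1)`, where it is `2 * y + 2 * (1 - y)`. -/
lemma add_add_le (h : CycleRatio n y a) (hn : 3 ≤ n) {c d e : ℕ} (hs : c + d + e + 3 = n) :
    a (c + 1) + a (d + 1) + a (e + 1) ≤ 2 := by
  have h1 := h.add_le c d (by omega)
  have h2 := h.add_le (c + d) e (by omega)
  have h3 := h.two_mul_y hn
  rw [show n - 2 = c + d + e + 1 by omega] at h3
  linarith [h.one_eq hn]

end CycleRatio

/-! ### The lower bound: comparison with `C_n` -/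

section Lower

variable {V : Type*} {G : SimpleGraph V}

/-- `ClosedIn G R S`: the set `R ⊆ S` is a union of components of the subgraph induced by `S`. -/
def ClosedIn (G : SimpleGraph V) (R S : Finset V) : Prop :=
  R ⊆ S ∧ ∀ a ∈ R, ∀ b ∈ S, G.Adj a b → b ∈ R

/-- `Meets G A S`: the set `A` meets every component of the subgraph induced by `S`. -/
def Meets (G : SimpleGraph V) (A : Set V) (S : Finset V) : Prop :=
  ∀ R, ClosedIn G R S → R.Nonempty → ∃ v ∈ R, v ∈ A

lemma ClosedIn.trans {R S T : Finset V} (h : ClosedIn G R S) (h' : ClosedIn G S T) :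
    ClosedIn G R T :=
  ⟨h.1.trans h'.1, fun a ha b hb hab => h.2 a ha b (h'.2 a (h.1 ha) b hb hab) hab⟩

lemma ClosedIn.sdiff [DecidableEq V] {R S : Finset V} (h : ClosedIn G R S) :
    ClosedIn G (S \ R) S := by
  refine ⟨Finset.sdiff_subset, fun a ha b hb hab => Finset.mem_sdiff.2 ⟨hb, fun hbR => ?_⟩⟩
  rw [Finset.mem_sdiff] at ha
  exact ha.2 (h.2 b hbR a ha.1 hab.symm)

lemma Meets.mono {A : Set V} {R S : Finset V} (h : Meets G A S) (hR : ClosedIn G R S) :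
    Meets G A R := fun _ hQ => h _ (hQ.trans hR)

open Classical in
/-- The vertices of `S` outside `A`. -/
noncomputable def outside (A : Set V) (S : Finset V) : Finset V := S.filter fun w => w ∉ A

lemma mem_outside {A : Set V} {S : Finset V} {w : V} : w ∈ outside A S ↔ w ∈ S ∧ w ∉ A := by
  classical
  simp [outside]

lemma away_eq_outside {v : V} {S : Finset V} : away G v S = outside {w | G.Adj v w} S := by
  ext w
  simp [mem_away, mem_outside]

/-- The path maximizes the ratio `I(S) / I(S - A)` over all induced subgraphs on `k` vertices all
of whose components meet `A`. A connected `S` is treated by deleting a vertex of `A`, whose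
neighbours meet all remaining components; a disconnected one by supermultiplicativity. -/
lemma ratio_bound {n : ℕ} {y : ℝ} {a : ℕ → ℝ} (hn : 3 ≤ n) (h : CycleRatio n y a)
    (hF : ∀ S, 0 < indepSum G y S) (S : Finset V) (A : Set V) (hS : S.card < n)
    (hA : Meets G A S) :
    indepSum G y S ≤ a S.card * indepSum G y (outside A S) := by
  classical
  induction S using Finset.strongInduction generalizing A with
  | H S ih =>
    rcases S.eq_empty_or_nonempty with rfl | hne
    · simp [outside, h.zero]
    by_cases hconn : ∃ R, ClosedIn G R S ∧ R.Nonempty ∧ R ≠ S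
    · obtain ⟨R, hR, hRn, hRS⟩ := hconn
      have hRss : R ⊂ S := Finset.ssubset_iff_subset_ne.2 ⟨hR.1, hRS⟩
      have hQss : S \ R ⊂ S := Finset.sdiff_ssubset hR.1 hRn
      have hcard : R.card + (S \ R).card = S.card := by
        rw [add_comm, Finset.card_sdiff_add_card_eq_card hR.1]
      have i1 := ih R hRss A (by omega) (hA.mono hR)
      have i2 := ih (S \ R) hQss A (by omega) (hA.mono hR.sdiff)
      have hsep : ∀ x ∈ R, ∀ z ∈ S \ R, ¬ G.Adj x z := by
        intro x hx z hz hxz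
        rw [Finset.mem_sdiff] at hz
        exact hz.2 (hR.2 x hx z hz.1 hxz)
      have e1 : indepSum G y S = indepSum G y R * indepSum G y (S \ R) := by
        rw [← indepSum_union Finset.disjoint_sdiff hsep, Finset.union_sdiff_of_subset hR.1]
      have hout : outside A S = outside A R ∪ outside A (S \ R) := by
        ext w
        simp only [mem_outside, Finset.mem_union, Finset.mem_sdiff]
        have := @hR.1 w
        tauto
      have e2 : indepSum G y (outside A S) =
          indepSum G y (outside A R) * indepSum G y (outside A (S \ R)) := by
        rw [hout]
        refine indepSum_union ?_ ?_
        · rw [Finset.disjoint_left]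
          intro w h1 h2
          exact (Finset.mem_sdiff.1 (mem_outside.1 h2).1).2 (mem_outside.1 h1).1
        · exact fun x hx z hz => hsep x (mem_outside.1 hx).1 z (mem_outside.1 hz).1
      have hmul := h.mul_le hn (k := R.card) (l := (S \ R).card) (by omega)
      rw [hcard] at hmul
      have q1 := hF (outside A R)
      have q2 := hF (outside A (S \ R))
      rw [e1, e2]
      calc indepSum G y R * indepSum G y (S \ R)
          ≤ (a R.card * indepSum G y (outside A R)) *
            (a (S \ R).card * indepSum G y (outside A (S \ R))) :=
            mul_le_mul i1 i2 (hF _).le ((hF R).le.trans i1)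
        _ = (a R.card * a (S \ R).card) *
            (indepSum G y (outside A R) * indepSum G y (outside A (S \ R))) := by ring
        _ ≤ _ := mul_le_mul_of_nonneg_right hmul (mul_pos q1 q2).le
    · push Not at hconn
      obtain ⟨v, hv, hvA⟩ := hA S ⟨subset_rfl, fun _ _ b hb _ => hb⟩ hne
      have hss : S.erase v ⊂ S := Finset.erase_ssubset hv
      have hcard : (S.erase v).card + 1 = S.card := Finset.card_erase_add_one hv
      have hmeets : Meets G {w | G.Adj v w} (S.erase v) := by
        intro R hR hRn
        by_contra hcon
        push Not at hcon
        have hclosed : ClosedIn G R S := by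
          refine ⟨hR.1.trans hss.1, fun x hx b hb hxb => ?_⟩
          by_cases hbv : b = v
          · subst hbv
            exact absurd hxb.symm (hcon x hx)
          · exact hR.2 x hx b (Finset.mem_erase.2 ⟨hbv, hb⟩) hxb
        have := hconn R hclosed hRn
        exact Finset.notMem_erase v S (hR.1 (this ▸ hv))
      have i1 := ih (S.erase v) hss _ (by omega) hmeets
      rw [← away_eq_outside] at i1
      have hsub : outside A S ⊆ S.erase v := by
        intro w hw
        rw [mem_outside] at hw
        exact Finset.mem_erase.2 ⟨fun e => hw.2 (e ▸ hvA), hw.1⟩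
      have hmono := indepSum_anti h.ypos.le (fun S => (hF S).le) hsub
      have hk := h.pos (S.erase v).card (by omega)
      have hstep := h.step (S.erase v).card (by omega)
      rw [hcard] at hstep
      have hS' := h.pos S.card hS
      have i2 : indepSum G y (S.erase v) / a (S.erase v).card ≤
          indepSum G y (away G v (S.erase v)) := by
        rw [div_le_iff₀ hk]
        linarith
      have i3 := mul_le_mul_of_nonneg_left i2 h.ypos.le
      calc indepSum G y S
          = indepSum G y (S.erase v) - y * indepSum G y (away G v (S.erase v)) :=
            indepSum_erase hv
        _ ≤ indepSum G y (S.erase v) - y * (indepSum G y (S.erase v) / a (S.erase v).card) := by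
            linarith
        _ = a S.card * indepSum G y (S.erase v) := by rw [hstep]; ring
        _ ≤ _ := mul_le_mul_of_nonneg_left hmono hS'.le

/-- A set closed under adjacency in a connected graph is everything once it is nonempty. -/
lemma SimpleGraph.Connected.eq_univ_of_closed {H : SimpleGraph V} (hH : H.Connected)
    {P : V → Prop} (hP : ∀ a b, P a → H.Adj a b → P b) {u : V} (hu : P u) (w : V) : P w := by
  obtain ⟨p⟩ := hH.preconnected u w
  induction p with
  | nil => exact hu
  | cons hab _ ih => exact ih (hP _ _ hu hab)

/-- The union of the components of the subgraph induced by `W` that avoid `A`. -/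
lemma exists_avoiding (G : SimpleGraph V) (A : Set V) (W : Finset V) :
    ∃ R, ClosedIn G R W ∧ (∀ w ∈ R, w ∉ A) ∧
      ∀ Q, ClosedIn G Q W → (∀ w ∈ Q, w ∉ A) → Q ⊆ R := by
  classical
  refine ⟨(W.powerset.filter fun Q => ClosedIn G Q W ∧ ∀ w ∈ Q, w ∉ A).biUnion id,
    ⟨?_, ?_⟩, ?_, ?_⟩
  · intro w hw
    simp only [Finset.mem_biUnion, Finset.mem_filter, Finset.mem_powerset] at hw
    obtain ⟨Q, hQ, hw⟩ := hw
    exact hQ.1 hw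
  · intro x hx b hb hxb
    simp only [Finset.mem_biUnion, Finset.mem_filter, Finset.mem_powerset] at hx ⊢
    obtain ⟨Q, hQ, hxQ⟩ := hx
    exact ⟨Q, hQ, hQ.2.1.2 x hxQ b hb hxb⟩
  · intro w hw
    simp only [Finset.mem_biUnion, Finset.mem_filter, Finset.mem_powerset] at hw
    obtain ⟨Q, hQ, hw⟩ := hw
    exact hQ.2.2 w hw
  · intro Q hQ hQA w hw
    simp only [Finset.mem_biUnion, Finset.mem_filter, Finset.mem_powerset]
    exact ⟨Q, ⟨hQ.1, hQ, hQA⟩, hw⟩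

/-- A connected graph with an edge `uv` on a cycle cannot have all its induced subgraphs positive
at the largest root of `I(C_n)`. Deleting `u` and `v` leaves the components `R₁` joined only to
`u`, the components `R₂` joined only to `v`, and a nonempty rest `C` joined to both; expanding
`I(G)` at `u` and `v` and bounding the three ratios by those of paths reduces the claim to
`CycleRatio.add_add_le`. -/
lemma not_all_pos [Fintype V] {n : ℕ} {y : ℝ} {a : ℕ → ℝ} (hn : 3 ≤ n) (h : CycleRatio n y a)
    (hcard : Fintype.card V = n) (hG : G.Connected) {u v : V} (huv : G.Adj u v)
    (hbr : ¬ G.IsBridge s(u, v)) (hF : ∀ S, 0 < indepSum G y S) : False := by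
  classical
  have hconn := hG.connected_delete_edge_of_not_isBridge hbr
  let W : Finset V := (Finset.univ.erase u).erase v
  have hW : ∀ w, w ∈ W ↔ w ≠ v ∧ w ≠ u := by simp [W]
  obtain ⟨R₁, hR₁, hA₁, hmax₁⟩ := exists_avoiding G {w | G.Adj v w} W
  obtain ⟨R₂, hR₂, hA₂, hmax₂⟩ := exists_avoiding G {w | G.Adj u w} W
  -- No set of components of `W` avoids the neighbourhoods of both `u` and `v`.
  have hboth : ∀ Q, ClosedIn G Q W → Q.Nonempty → (∀ w ∈ Q, ¬ G.Adj u w) →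
      (∀ w ∈ Q, ¬ G.Adj v w) → False := by
    intro Q hQ ⟨q, hq⟩ hu hv
    have : u ∈ Q := by
      refine hG.eq_univ_of_closed (P := fun w => w ∈ Q) (fun x b hx hxb => ?_) hq u
      refine hQ.2 x hx b ((hW b).2 ⟨?_, ?_⟩) hxb
      · rintro rfl
        exact hv x hx hxb.symm
      · rintro rfl
        exact hu x hx hxb.symm
    exact ((hW u).1 (hQ.1 this)).2 rfl
  have hdisj : Disjoint R₁ R₂ := by
    rw [Finset.disjoint_left]
    intro w h1 h2
    refine hboth (R₁ ∩ R₂) ⟨Finset.inter_subset_left.trans hR₁.1, ?_⟩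
      ⟨w, Finset.mem_inter.2 ⟨h1, h2⟩⟩ (fun w hw => hA₂ w (Finset.mem_inter.1 hw).2)
      (fun w hw => hA₁ w (Finset.mem_inter.1 hw).1)
    intro x hx b hb hxb
    rw [Finset.mem_inter] at hx ⊢
    exact ⟨hR₁.2 x hx.1 b hb hxb, hR₂.2 x hx.2 b hb hxb⟩
  set C : Finset V := W \ (R₁ ∪ R₂) with hCdef
  have hR₁₂ : ClosedIn G (R₁ ∪ R₂) W := by
    refine ⟨Finset.union_subset hR₁.1 hR₂.1, fun x hx b hb hxb => ?_⟩
    rw [Finset.mem_union] at hx ⊢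
    exact hx.imp (fun hx => hR₁.2 x hx b hb hxb) (fun hx => hR₂.2 x hx b hb hxb)
  have hC : ClosedIn G C W := hR₁₂.sdiff
  have hCne : C.Nonempty := by
    by_contra hcon
    rw [Finset.not_nonempty_iff_eq_empty] at hcon
    have hcover : ∀ w, w = v ∨ w = u ∨ w ∈ R₁ ∨ w ∈ R₂ := by
      intro w
      by_contra hc
      push Not at hc
      have : w ∈ C := Finset.mem_sdiff.2 ⟨(hW w).2 ⟨hc.1, hc.2.1⟩, by simp [hc.2.2]⟩
      simp [hcon] at this
    -- Otherwise `R₁ ∪ {u}` is closed under adjacency once the edge `uv` is removed.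
    have := hconn.eq_univ_of_closed (P := fun w => w = u ∨ w ∈ R₁) (fun x b hx hxb => ?_)
      (Or.inl rfl) v
    · rcases this with hvu | hvR
      · exact huv.ne hvu.symm
      · exact ((hW v).1 (hR₁.1 hvR)).1 rfl
    · rw [deleteEdges_adj, Set.mem_singleton_iff, Sym2.eq_iff] at hxb
      obtain ⟨hxb, hnot⟩ := hxb
      rcases hx with rfl | hx
      · rcases hcover b with rfl | rfl | hb | hb
        · exact absurd (Or.inl ⟨rfl, rfl⟩) hnot
        · exact Or.inl rfl
        · exact Or.inr hb
        · exact absurd hxb (hA₂ b hb)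
      · by_cases hbu : b = u
        · exact Or.inl hbu
        · refine Or.inr (hR₁.2 x hx b ((hW b).2 ⟨?_, hbu⟩) hxb)
          rintro rfl
          exact hA₁ x hx hxb.symm
  have mCu : Meets G {w | G.Adj u w} C := by
    intro Q hQ hQn
    by_contra hcon
    push Not at hcon
    obtain ⟨q, hq⟩ := hQn
    have := hmax₂ Q (hQ.trans hC) hcon hq
    exact (Finset.mem_sdiff.1 (hQ.1 hq)).2 (Finset.mem_union_right _ this)
  have mCv : Meets G {w | G.Adj v w} C := by
    intro Q hQ hQn
    by_contra hcon
    push Not at hcon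
    obtain ⟨q, hq⟩ := hQn
    have := hmax₁ Q (hQ.trans hC) hcon hq
    exact (Finset.mem_sdiff.1 (hQ.1 hq)).2 (Finset.mem_union_left _ this)
  have m1 : Meets G {w | G.Adj u w} R₁ := by
    intro Q hQ hQn
    by_contra hcon
    push Not at hcon
    exact hboth Q (hQ.trans hR₁) hQn hcon fun w hw => hA₁ w (hQ.1 hw)
  have m2 : Meets G {w | G.Adj v w} R₂ := by
    intro Q hQ hQn
    by_contra hcon
    push Not at hcon
    exact hboth Q (hQ.trans hR₂) hQn (fun w hw => hA₂ w (hQ.1 hw)) hcon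
  have hWcard : W.card + 2 = n := by
    have e1 := Finset.card_erase_add_one (Finset.mem_univ u)
    have e2 := Finset.card_erase_add_one
      (Finset.mem_erase.2 ⟨huv.ne', Finset.mem_univ v⟩ : v ∈ Finset.univ.erase u)
    rw [Finset.card_univ, hcard] at e1
    change ((Finset.univ.erase u).erase v).card + 2 = n
    omega
  have hWsum : C.card + R₁.card + R₂.card = W.card := by
    rw [add_assoc, ← Finset.card_union_of_disjoint hdisj,
      Finset.card_sdiff_add_card_eq_card hR₁₂.1]
  have hCpos : 0 < C.card := hCne.card_pos
  -- The independence polynomial factors over `C`, `R₁`, `R₂`, also after deleting vertices.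
  have hprod : ∀ C' R₁' R₂' : Finset V, C' ⊆ C → R₁' ⊆ R₁ → R₂' ⊆ R₂ →
      indepSum G y (C' ∪ (R₁' ∪ R₂')) =
        indepSum G y C' * (indepSum G y R₁' * indepSum G y R₂') := by
    intro C' R₁' R₂' hC' hR₁' hR₂'
    have hsub : R₁' ∪ R₂' ⊆ R₁ ∪ R₂ := Finset.union_subset_union hR₁' hR₂'
    rw [indepSum_union, indepSum_union]
    · exact hdisj.mono hR₁' hR₂'
    · intro x hx z hz hxz
      exact Finset.disjoint_left.1 hdisj (hR₁.2 x (hR₁' hx) z (hR₂.1 (hR₂' hz)) hxz) (hR₂' hz)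
    · exact Finset.sdiff_disjoint.mono hC' hsub
    · intro x hx z hz hxz
      exact (Finset.mem_sdiff.1 (hC.2 x (hC' hx) z (hR₁₂.1 (hsub hz)) hxz)).2 (hsub hz)
  have hWeq : W = C ∪ (R₁ ∪ R₂) := (Finset.sdiff_union_of_subset hR₁₂.1).symm
  have eW := hprod C R₁ R₂ subset_rfl subset_rfl subset_rfl
  rw [← hWeq] at eW
  have eu : away G u W = away G u C ∪ (away G u R₁ ∪ R₂) := by
    ext w
    have := hA₂ w
    simp only [Set.mem_ofPred_eq] at this
    rw [hWeq]
    simp only [mem_away, Finset.mem_union]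
    tauto
  have ev : away G v W = away G v C ∪ (R₁ ∪ away G v R₂) := by
    ext w
    have := hA₁ w
    simp only [Set.mem_ofPred_eq] at this
    rw [hWeq]
    simp only [mem_away, Finset.mem_union]
    tauto
  have eWu := hprod _ _ _ (away_subset (G := G) (v := u)) (away_subset (G := G) (v := u))
    (subset_refl R₂)
  have eWv := hprod _ _ _ (away_subset (G := G) (v := v)) (subset_refl R₁)
    (away_subset (G := G) (v := v))
  rw [← eu] at eWu
  rw [← ev] at eWv
  have hexp : indepSum G y Finset.univ =
      indepSum G y W - y * indepSum G y (away G v W) - y * indepSum G y (away G u W) := by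
    have hau : away G u (Finset.univ.erase u) = away G u W := by
      ext w
      simp only [mem_away, hW, Finset.mem_erase, Finset.mem_univ, and_true]
      constructor
      · rintro ⟨h1, h2⟩
        exact ⟨⟨fun e => h2 (e ▸ huv), h1⟩, h2⟩
      · rintro ⟨⟨h1, h2⟩, h3⟩
        exact ⟨h2, h3⟩
    rw [indepSum_erase (Finset.mem_univ u), hau,
      indepSum_erase (Finset.mem_erase.2 ⟨huv.ne', Finset.mem_univ v⟩ : v ∈ Finset.univ.erase u)]
  have bCu := ratio_bound hn h hF C _ (by omega) mCu
  have bCv := ratio_bound hn h hF C _ (by omega) mCv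
  have b1 := ratio_bound hn h hF R₁ _ (by omega) m1
  have b2 := ratio_bound hn h hF R₂ _ (by omega) m2
  rw [← away_eq_outside] at bCu bCv b1 b2
  have pC := h.pos C.card (by omega)
  have p1 := h.pos R₁.card (by omega)
  have p2 := h.pos R₂.card (by omega)
  have s1 := h.step R₁.card (by omega)
  have s2 := h.step R₂.card (by omega)
  have hsum := h.add_add_le hn (c := C.card - 1) (d := R₁.card) (e := R₂.card) (by omega)
  rw [Nat.sub_add_cancel hCpos] at hsum
  have hy := h.ypos
  have fC := hF C
  have f1 := hF R₁
  have f2 := hF R₂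
  -- Both neighbourhood terms, bounded below by multiples of `I(W)`.
  have tu : indepSum G y W ≤ a C.card * a R₁.card * indepSum G y (away G u W) := by
    rw [eW, eWu]
    have := mul_le_mul bCu b1 f1.le (fC.le.trans bCu)
    nlinarith [mul_le_mul_of_nonneg_right this f2.le]
  have tv : indepSum G y W ≤ a C.card * a R₂.card * indepSum G y (away G v W) := by
    rw [eW, eWv]
    have := mul_le_mul bCv b2 f2.le (fC.le.trans bCv)
    nlinarith [mul_le_mul_of_nonneg_right this f1.le]
  have tu' : y / a R₁.card * indepSum G y W ≤ a C.card * (y * indepSum G y (away G u W)) := by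
    rw [div_mul_eq_mul_div, div_le_iff₀ p1]
    nlinarith [mul_le_mul_of_nonneg_left tu hy.le]
  have tv' : y / a R₂.card * indepSum G y W ≤ a C.card * (y * indepSum G y (away G v W)) := by
    rw [div_mul_eq_mul_div, div_le_iff₀ p2]
    nlinarith [mul_le_mul_of_nonneg_left tv hy.le]
  have hcoef : a C.card ≤ y / a R₁.card + y / a R₂.card := by linarith
  have hfin := mul_pos pC (hF Finset.univ)
  rw [hexp] at hfin
  nlinarith [mul_le_mul_of_nonneg_right hcoef (hF W).le]

end Lower

/-! ### The independence polynomial of the cycle -/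

/-- `pathVal y (k + 1)` is the value of `I(P_k)` at `-y`; the shift by one makes room for
the conventional value `1` at `k = -1`. -/
noncomputable def pathVal (y : ℝ) : ℕ → ℝ
  | 0 => 1
  | 1 => 1
  | k + 2 => pathVal y (k + 1) - y * pathVal y k

/-- The vertices `i, …, i + k - 1` of the cycle. -/
def cycleArc (n i k : ℕ) : Finset (Fin n) :=
  Finset.univ.filter fun w => i ≤ w.val ∧ w.val < i + k

lemma mem_cycleArc {n i k : ℕ} {w : Fin n} :
    w ∈ cycleArc n i k ↔ i ≤ w.val ∧ w.val < i + k := by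
  simp [cycleArc]

lemma cycleGraph_adj_val {n : ℕ} (hn : 3 ≤ n) (u v : Fin n) :
    (cycleGraph n).Adj u v ↔ u.val + 1 = v.val ∨ v.val + 1 = u.val ∨
      (u.val = 0 ∧ v.val + 1 = n) ∨ (v.val = 0 ∧ u.val + 1 = n) := by
  rw [cycleGraph_adj']
  have hu := u.2
  have hv := v.2
  have key : ∀ x z : Fin n, (x - z).val = if z.val ≤ x.val then x.val - z.val
      else n + x.val - z.val := by
    intro x z
    have hx := x.2
    have hz := z.2
    rw [Fin.sub_def]
    split_ifs with hle
    · change (n - z.val + x.val) % n = _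
      rw [show n - z.val + x.val = (x.val - z.val) + n by omega, Nat.add_mod_right,
        Nat.mod_eq_of_lt (by omega)]
    · change (n - z.val + x.val) % n = _
      rw [Nat.mod_eq_of_lt (by omega)]
      omega
  rw [key, key]
  split_ifs <;> omega

lemma indepSum_cycleArc {n : ℕ} (hn : 3 ≤ n) (y : ℝ) (i : ℕ) :
    ∀ k, i + k ≤ n → k < n → indepSum (cycleGraph n) y (cycleArc n i k) = pathVal y (k + 1) := by
  intro k
  induction k using Nat.strong_induction_on with
  | _ k ih =>
    intro hik hk
    rcases k with _ | k
    · have : cycleArc n i 0 = ∅ := by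
        ext w
        simp only [mem_cycleArc, Finset.notMem_empty, iff_false]
        omega
      rw [this, indepSum_empty, pathVal]
    obtain ⟨z, hz⟩ : ∃ z : Fin n, z.val = i + k := ⟨⟨i + k, by omega⟩, rfl⟩
    have hins : cycleArc n i (k + 1) = insert z (cycleArc n i k) := by
      ext w
      simp only [Finset.mem_insert, mem_cycleArc, Fin.ext_iff]
      omega
    have hnot : z ∉ cycleArc n i k := by
      rw [mem_cycleArc]
      omega
    have haway : away (cycleGraph n) z (cycleArc n i k) = cycleArc n i (k - 1) := by
      ext w
      simp only [mem_away, mem_cycleArc, cycleGraph_adj_val hn]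
      have := w.2
      omega
    rw [hins, indepSum_insert hnot, haway, ih k (by omega) (by omega) (by omega),
      ih (k - 1) (by omega) (by omega) (by omega)]
    rcases k with _ | k
    · simp [pathVal]
    · rfl

lemma indepSum_cycleGraph {n : ℕ} (hn : 3 ≤ n) (y : ℝ) :
    indepSum (cycleGraph n) y Finset.univ = pathVal y n - y * pathVal y (n - 2) := by
  obtain ⟨z, hz⟩ : ∃ z : Fin n, z.val = n - 1 := ⟨⟨n - 1, by omega⟩, rfl⟩
  have hins : Finset.univ = insert z (cycleArc n 0 (n - 1)) := by
    ext w
    simp only [Finset.mem_insert, mem_cycleArc, Fin.ext_iff, Finset.mem_univ, true_iff]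
    have := w.2
    omega
  have hnot : z ∉ cycleArc n 0 (n - 1) := by
    rw [mem_cycleArc]
    omega
  have haway : away (cycleGraph n) z (cycleArc n 0 (n - 1)) = cycleArc n 1 (n - 3) := by
    ext w
    simp only [mem_away, mem_cycleArc, cycleGraph_adj_val hn]
    have := w.2
    omega
  rw [hins, indepSum_insert hnot, haway, indepSum_cycleArc hn y 0 _ (by omega) (by omega),
    indepSum_cycleArc hn y 1 _ (by omega) (by omega), show n - 1 + 1 = n by omega,
    show n - 3 + 1 = n - 2 by omega]

lemma cycleRatio_of_root {n : ℕ} (hn : 3 ≤ n) {y : ℝ} (hy : 0 < y)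
    (hroot : indepSum (cycleGraph n) y Finset.univ = 0)
    (hnn : ∀ S, 0 ≤ indepSum (cycleGraph n) y S) :
    CycleRatio n y fun k => pathVal y (k + 1) / pathVal y k := by
  have hrec : ∀ k, pathVal y (k + 2) = pathVal y (k + 1) - y * pathVal y k := fun k => rfl
  rw [indepSum_cycleGraph hn] at hroot
  have hn2 := hrec (n - 2)
  rw [show n - 2 + 2 = n by omega, show n - 2 + 1 = n - 1 by omega] at hn2
  have hnonneg : ∀ k, k < n → 0 ≤ pathVal y (k + 1) := by
    intro k hk
    rw [← indepSum_cycleArc hn y 0 k (by omega) hk]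
    exact hnn _
  -- A zero of the nonnegative sequence would force a negative next term.
  have hpos : ∀ k, k < n → 0 < pathVal y k ∧ 0 < pathVal y (k + 1) := by
    intro k
    induction k with
    | zero => intro _; simp [pathVal]
    | succ k ih =>
      intro hk
      obtain ⟨-, h2⟩ := ih (by omega)
      refine ⟨h2, lt_of_le_of_ne (hnonneg (k + 1) hk) fun h0 => ?_⟩
      rcases Nat.lt_or_ge (k + 2) n with hlt | hge
      · have h3 := hnonneg (k + 2) hlt
        have h4 := hrec (k + 1)
        have h5 := mul_pos hy h2
        rw [show k + 2 + 1 = k + 1 + 2 by omega, h4] at h3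
        rw [show k + 1 + 1 = k + 2 by omega] at h0 h3
        linarith
      · obtain rfl : n = k + 2 := by omega
        rw [show k + 2 - 1 = k + 1 by omega] at hn2
        rw [show k + 1 + 1 = k + 2 by omega] at h0
        linarith
  refine ⟨hy, by simp [pathVal], ?_, ?_, ?_⟩
  · intro k hk
    have h1 := (hpos k (by omega)).1
    have h2 := (hpos k (by omega)).2
    change pathVal y (k + 2) / pathVal y (k + 1) = 1 - y / (pathVal y (k + 1) / pathVal y k)
    rw [hrec]
    field_simp
  · exact fun k hk => div_pos (hpos k hk).2 (hpos k hk).1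
  · have h1 := (hpos (n - 1) (by omega)).1
    change pathVal y (n - 1 + 1) / pathVal y (n - 1) = 1 / 2
    rw [show n - 1 + 1 = n by omega, div_eq_div_iff h1.ne' two_ne_zero]
    linarith

lemma xi_cycleGraph_le {V : Type*} [Fintype V] {n : ℕ} (hn : 3 ≤ n) {G : SimpleGraph V}
    (hcard : Fintype.card V = n) (hG : Unicyclic G) : xi (cycleGraph n) ≤ xi G := by
  obtain ⟨u, v, huv, hbr⟩ := hG.exists_not_isBridge
  have : Nonempty V := ⟨u⟩
  have : Nonempty (Fin n) := ⟨⟨0, by omega⟩⟩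
  obtain ⟨y, hxi, hy, -, hroot, hnn, -⟩ := exists_xi (cycleGraph n)
  obtain ⟨z, hxi', -, -, -, -, hz⟩ := exists_xi G
  rw [hxi, hxi', neg_le_neg_iff]
  by_contra hcon
  exact not_all_pos hn (cycleRatio_of_root hn hy hroot hnn) hcard hG.1 huv hbr
    (hz y (not_le.1 hcon))

/-- If `G` is connected unicyclic of order `n ≥ 3` then
`ξ(C_n) ≤ ξ(G) ≤ ξ(U_n)`. -/
theorem stmt2 {V : Type*} [Fintype V] (n : ℕ) (hn : 3 ≤ n) (G : SimpleGraph V)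
    (hcard : Fintype.card V = n) (hG : Unicyclic G) :
    xi (cycleGraph n) ≤ xi G ∧ xi G ≤ xi (Ugraph n) :=
  ⟨xi_cycleGraph_le hn hcard hG, xi_le_xi_Ugraph hn hcard hG⟩
end

section
/- A tree T with at least 2 vertices is well-covered if and only if T is isomorphic to T'* for some tree T'. -/
/-!
A corona has a perfect matching by pendant edges, and a maximal independent set contains exactly
one end of each of these edges (`card_of_pendant`), so coronas are well-covered.

Conversely, a well-covered tree with at least two vertices is bipartite without isolated vertices.
Both colour classes are maximal independent sets, and Hall's theorem gives a perfect matching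
(`WellCovered.exists_pairing`). If both ends of a matching edge had further neighbours `x` and
`y`, these would be nonadjacent, since a tree has no 4-cycle; a maximal independent set containing
`x` and `y` would miss this edge altogether and so be smaller than a colour class. Hence every
matching edge is pendant (`WellCovered.pendant`), which exhibits the tree as the corona of the
graph induced on the other ends (`coronaIso`); that graph is again a tree (`isTree_comap`).
-/

open Polynomial SimpleGraph

/-! ### Independent sets and perfect matchings -/

theorem IsIndepFinset.exists_maximal {V : Type*} [Fintype V] {G : SimpleGraph V} {s : Finset V}
    (hs : IsIndepFinset G s) :
    ∃ t, s ⊆ t ∧ Maximal (IsIndepFinset G) t := by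
  classical
  exact (Set.toFinite {t | IsIndepFinset G t}).exists_le_maximal hs

open Classical in
/-- Maximality in the inclusion order, in the one-point-extension form used by `WellCovered`. -/
theorem maximal_indep_iff {V : Type*} {G : SimpleGraph V} {s : Finset V} :
    Maximal (IsIndepFinset G) s ↔
      IsIndepFinset G s ∧ ∀ v ∉ s, ¬ IsIndepFinset G (insert v s) := by
  constructor
  · intro h
    refine ⟨h.prop, fun v hv hi => hv ?_⟩
    exact h.le_of_ge hi (Finset.subset_insert v s) (Finset.mem_insert_self v s)
  · rintro ⟨h, hm⟩
    refine ⟨h, fun t ht hst v hv => ?_⟩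
    by_contra hvs
    refine hm v hvs fun a ha b hb => ht a ?_ b ?_
    · rcases Finset.mem_insert.1 ha with rfl | ha
      exacts [hv, hst ha]
    · rcases Finset.mem_insert.1 hb with rfl | hb
      exacts [hv, hst hb]

theorem WellCovered.card_eq {V : Type*} {G : SimpleGraph V} (h : WellCovered G)
    {s t : Finset V} (hs : Maximal (IsIndepFinset G) s) (ht : Maximal (IsIndepFinset G) t) :
    s.card = t.card :=
  h s t (maximal_indep_iff.1 hs).1 (maximal_indep_iff.1 hs).2
    (maximal_indep_iff.1 ht).1 (maximal_indep_iff.1 ht).2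

theorem WellCovered.card_le {V : Type*} [Fintype V] {G : SimpleGraph V} (h : WellCovered G)
    {s t : Finset V} (hs : Maximal (IsIndepFinset G) s) (ht : IsIndepFinset G t) :
    t.card ≤ s.card := by
  obtain ⟨u, htu, hu⟩ := ht.exists_maximal
  exact (Finset.card_le_card htu).trans (h.card_eq hu hs).le

/-- A perfect matching of `G`, indexed by `ι`: the vertices are enumerated so that
`inl i` and `inr i` are the two ends of the `i`-th matching edge. -/
def IsPairing {V ι : Type*} (G : SimpleGraph V) (h : ι ⊕ ι ≃ V) : Prop :=
  ∀ i, G.Adj (h (Sum.inl i)) (h (Sum.inr i))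

/-- The index of the matching edge containing a given vertex. -/
def pairIndex {V ι : Type*} (h : ι ⊕ ι ≃ V) (v : V) : ι := Sum.elim id id (h.symm v)

@[simp] theorem pairIndex_inl {V ι : Type*} (h : ι ⊕ ι ≃ V) (i : ι) :
    pairIndex h (h (Sum.inl i)) = i := by simp [pairIndex]

@[simp] theorem pairIndex_inr {V ι : Type*} (h : ι ⊕ ι ≃ V) (i : ι) :
    pairIndex h (h (Sum.inr i)) = i := by simp [pairIndex]

theorem eq_or_eq_pairIndex {V ι : Type*} (h : ι ⊕ ι ≃ V) (v : V) :
    v = h (Sum.inl (pairIndex h v)) ∨ v = h (Sum.inr (pairIndex h v)) := by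
  obtain ⟨x | x, rfl⟩ := h.surjective v <;> simp

/-- An independent set contains at most one end of each matching edge. -/
theorem IsPairing.injOn {V ι : Type*} {G : SimpleGraph V} {h : ι ⊕ ι ≃ V}
    (hp : IsPairing G h) {s : Finset V} (hs : IsIndepFinset G s) :
    Set.InjOn (pairIndex h) s := by
  intro u hu v hv huv
  have hadj := hp (pairIndex h v)
  rcases eq_or_eq_pairIndex h u with hu' | hu' <;>
    rcases eq_or_eq_pairIndex h v with hv' | hv' <;> rw [huv] at hu'
  · rw [hu', ← hv']
  · rw [← hu', ← hv'] at hadj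
    exact absurd hadj (hs u hu v hv)
  · rw [← hu', ← hv'] at hadj
    exact absurd hadj (hs v hv u hu)
  · rw [hu', ← hv']

/-- If every matching edge has a pendant end, a maximal independent set contains exactly one
end of each matching edge. -/
theorem card_of_pendant {V ι : Type*} [Fintype ι] {G : SimpleGraph V} {h : ι ⊕ ι ≃ V}
    (hp : IsPairing G h)
    (hl : ∀ i x, G.Adj (h (Sum.inr i)) x → x = h (Sum.inl i))
    {s : Finset V} (hs : Maximal (IsIndepFinset G) s) : s.card = Fintype.card ι := by
  classical
  rw [← Finset.card_image_of_injOn (hp.injOn hs.prop), ← Finset.card_univ]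
  congr 1
  rw [Finset.eq_univ_iff_forall]
  intro i
  by_contra hi
  have h1 : h (Sum.inl i) ∉ s := fun hm => hi (Finset.mem_image.2 ⟨_, hm, by simp⟩)
  have h2 : h (Sum.inr i) ∉ s := fun hm => hi (Finset.mem_image.2 ⟨_, hm, by simp⟩)
  refine (maximal_indep_iff.1 hs).2 _ h2 fun a ha b hb hab => ?_
  have hs' := hs.prop
  rcases Finset.mem_insert.1 ha with rfl | ha
  · rcases Finset.mem_insert.1 hb with rfl | hb
    · exact hab.ne rfl
    · exact h1 (hl i b hab ▸ hb)
  · rcases Finset.mem_insert.1 hb with rfl | hb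
    · exact h1 (hl i a hab.symm ▸ ha)
    · exact hs' a ha b hb hab

/-! ### Well-covered trees -/

theorem IsAcyclic.no_square {V : Type*} {G : SimpleGraph V} (hG : G.IsAcyclic) {a b c d : V}
    (hab : G.Adj a b) (hbc : G.Adj b c) (hcd : G.Adj c d) (hda : G.Adj d a)
    (hac : a ≠ c) (hbd : b ≠ d) : False := by
  refine hG (Walk.cons hab (Walk.cons hbc (Walk.cons hcd (Walk.cons hda Walk.nil)))) ?_
  have := hab.ne
  have := hbc.ne
  have := hcd.ne
  have := hda.ne
  rw [Walk.cons_isCycle_iff]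
  simp [Walk.isPath_def]
  grind

/-- A well-covered bipartite graph without isolated vertices has a perfect matching, and the
`inl` ends may be taken in one colour class. The two
colour classes `A`, `B` are maximal independent sets, hence equinumerous; and for `X ⊆ A` the set
`X ∪ (B \ N(X))` is independent, hence has at most `|B|` elements, which is Hall's condition. -/
theorem WellCovered.exists_pairing {V : Type*} [Fintype V] {G : SimpleGraph V}
    (hw : WellCovered G) (hc : G.Colorable 2) (hiso : ∀ v, ∃ w, G.Adj v w) :
    ∃ (m : ℕ) (h : Fin m ⊕ Fin m ≃ V), IsPairing G h ∧
      ∀ i j, ¬ G.Adj (h (Sum.inl i)) (h (Sum.inl j)) := by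
  classical
  obtain ⟨C⟩ := hc
  have hne : ∀ {u v}, G.Adj u v → (C u = 0 ↔ ¬ C v = 0) := by
    intro u v huv
    have := C.valid huv
    omega
  set A : Finset V := Finset.univ.filter (fun v => C v = 0) with hA
  set B : Finset V := Finset.univ.filter (fun v => ¬ C v = 0) with hB
  have hAm : Maximal (IsIndepFinset G) A := by
    rw [maximal_indep_iff]
    refine ⟨fun u hu v hv huv => ?_, fun v hv hi => ?_⟩
    · have := hne huv
      simp [A] at hu hv
      tauto
    · obtain ⟨w, hvw⟩ := hiso v
      have := hne hvw
      refine hi v (by simp) w ?_ hvw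
      simp [A] at hv ⊢
      tauto
  have hBm : Maximal (IsIndepFinset G) B := by
    rw [maximal_indep_iff]
    refine ⟨fun u hu v hv huv => ?_, fun v hv hi => ?_⟩
    · have := hne huv
      simp [B] at hu hv
      tauto
    · obtain ⟨w, hvw⟩ := hiso v
      have := hne hvw
      refine hi v (by simp) w ?_ hvw
      simp [B] at hv ⊢
      tauto
  have hcard := hw.card_eq hAm hBm
  have hall : ∀ X : Finset A, X.card ≤ (X.biUnion fun a => G.neighborFinset a).card := by
    intro X
    set N := X.biUnion fun a => G.neighborFinset (a : V) with hN
    have hNB : N ⊆ B := by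
      intro v hv
      simp only [hN, Finset.mem_biUnion, mem_neighborFinset] at hv
      obtain ⟨a, -, hav⟩ := hv
      have h1 := (Finset.mem_filter.1 a.2).2
      have h2 := hne hav
      simp only [B, Finset.mem_filter, Finset.mem_univ, true_and]
      tauto
    have hXA : X.map (Function.Embedding.subtype _) ⊆ A := by
      intro v hv
      simp at hv
      exact hv.1
    have hdisj : Disjoint (X.map (Function.Embedding.subtype _)) (B \ N) := by
      refine Finset.disjoint_of_subset_left hXA
        (Finset.disjoint_of_subset_right Finset.sdiff_subset ?_)
      exact Finset.disjoint_filter_filter_not _ _ _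
    have hind : IsIndepFinset G (X.map (Function.Embedding.subtype _) ∪ (B \ N)) := by
      have key : ∀ u ∈ X.map (Function.Embedding.subtype _), ∀ v ∈ B \ N, ¬ G.Adj u v := by
        intro u hu v hv huv
        obtain ⟨a, ha, rfl⟩ := Finset.mem_map.1 hu
        refine (Finset.mem_sdiff.1 hv).2 (Finset.mem_biUnion.2 ⟨a, ha, ?_⟩)
        simpa using huv
      intro u hu v hv huv
      rcases Finset.mem_union.1 hu with hu | hu <;> rcases Finset.mem_union.1 hv with hv | hv
      · exact hAm.prop u (hXA hu) v (hXA hv) huv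
      · exact key u hu v hv huv
      · exact key v hv u hu huv.symm
      · exact hBm.prop u (Finset.mem_sdiff.1 hu).1 v (Finset.mem_sdiff.1 hv).1 huv
    have h1 := hw.card_le hBm hind
    rw [Finset.card_union_of_disjoint hdisj, Finset.card_map, Finset.card_sdiff_of_subset hNB] at h1
    have h2 := Finset.card_le_card hNB
    omega
  obtain ⟨f, hf, hfA⟩ := (Finset.all_card_le_biUnion_card_iff_exists_injective _).1 hall
  have hadj : ∀ a : A, G.Adj a (f a) := fun a => by simpa using hfA a
  have hfB : ∀ a, f a ∈ B := by
    intro a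
    have h1 := (Finset.mem_filter.1 a.2).2
    have h2 := hne (hadj a)
    simp only [B, Finset.mem_filter, Finset.mem_univ, true_and]
    tauto
  let e : Fin A.card ≃ A := A.equivFin.symm
  have hinj : Function.Injective (Sum.elim (fun i => (e i : V)) fun i => f (e i)) := by
    refine Function.Injective.sumElim (Subtype.val_injective.comp e.injective)
      (hf.comp e.injective) fun i j hij => ?_
    have h1 := (e i).2
    have h2 := hfB (e j)
    simp only [hij, A, B, Finset.mem_filter] at h1 h2
    exact h2.2 h1.2
  have hVcard : Fintype.card (Fin A.card ⊕ Fin A.card) = Fintype.card V := by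
    have := Finset.card_filter_add_card_filter_not (s := (Finset.univ : Finset V))
      (fun v => C v = 0)
    simp only [Fintype.card_sum, Fintype.card_fin]
    rw [← Finset.card_univ (α := V), ← this]
    exact congrArg _ hcard
  refine ⟨A.card, Equiv.ofBijective _ ((Fintype.bijective_iff_injective_and_card _).2
    ⟨hinj, hVcard⟩), fun i => ?_, fun i j => ?_⟩
  · simpa using hadj (e i)
  · simpa using hAm.prop _ (e i).2 _ (e j).2

/-- Each edge of a perfect matching of a well-covered acyclic graph is pendant: otherwise, for
further neighbours `x`, `y` of its ends, the set `{x, y}` extends to a maximal independent set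
missing both ends, which is therefore smaller than the independent set of all `inl` ends. -/
theorem WellCovered.pendant {V ι : Type*} [Fintype V] [Fintype ι] {G : SimpleGraph V}
    (hw : WellCovered G) (hG : G.IsAcyclic) {h : ι ⊕ ι ≃ V}
    (hp : IsPairing G h) (hA : ∀ i j, ¬ G.Adj (h (Sum.inl i)) (h (Sum.inl j))) (i : ι) :
    (∀ x, G.Adj (h (Sum.inl i)) x → x = h (Sum.inr i)) ∨
      (∀ x, G.Adj (h (Sum.inr i)) x → x = h (Sum.inl i)) := by
  classical
  by_contra hcon
  push Not at hcon
  obtain ⟨⟨x, hx, hxi⟩, y, hy, hyi⟩ := hcon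
  have hxy : ¬ G.Adj x y := fun hxy =>
    IsAcyclic.no_square hG hx hxy hy.symm (hp i).symm hyi.symm hxi
  have hind : IsIndepFinset G {x, y} := by
    intro u hu v hv huv
    simp only [Finset.mem_insert, Finset.mem_singleton] at hu hv
    rcases hu with rfl | rfl <;> rcases hv with rfl | rfl
    exacts [huv.ne rfl, hxy huv, hxy huv.symm, huv.ne rfl]
  obtain ⟨s, hs, hsm⟩ := hind.exists_maximal
  have hlt : s.card < Fintype.card ι := by
    rw [← Finset.card_image_of_injOn (hp.injOn hsm.prop), Finset.card_lt_iff_ne_univ]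
    intro huniv
    obtain ⟨v, hv, rfl⟩ := Finset.mem_image.1 (huniv ▸ Finset.mem_univ i)
    rcases eq_or_eq_pairIndex h v with hv' | hv'
    · exact hsm.prop v hv x (hs (by simp)) (hv' ▸ hx)
    · exact hsm.prop v hv y (hs (by simp)) (hv' ▸ hy)
  have hle := hw.card_le hsm (t := Finset.univ.image (h ∘ Sum.inl)) (by
    intro u hu v hv
    obtain ⟨j, -, rfl⟩ := Finset.mem_image.1 hu
    obtain ⟨k, -, rfl⟩ := Finset.mem_image.1 hv
    exact hA j k)
  rw [Finset.card_image_of_injective _ (h.injective.comp Sum.inl_injective),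
    Finset.card_univ] at hle
  omega

/-- Exchanging the two ends where necessary, every `inr` end may be taken to be pendant. -/
theorem IsPairing.exists_oriented {V ι : Type*} {G : SimpleGraph V} {h : ι ⊕ ι ≃ V}
    (hp : IsPairing G h)
    (hl : ∀ i, (∀ x, G.Adj (h (Sum.inl i)) x → x = h (Sum.inr i)) ∨
      (∀ x, G.Adj (h (Sum.inr i)) x → x = h (Sum.inl i))) :
    ∃ k : ι ⊕ ι ≃ V, IsPairing G k ∧
      ∀ i x, G.Adj (k (Sum.inr i)) x → x = k (Sum.inl i) := by
  classical
  let P : ι → Prop := fun i => ∀ x, G.Adj (h (Sum.inr i)) x → x = h (Sum.inl i)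
  let s : ι ⊕ ι → ι ⊕ ι := Sum.elim
    (fun i => if P i then Sum.inl i else Sum.inr i) (fun i => if P i then Sum.inr i else Sum.inl i)
  have hs : Function.Involutive s := by
    rintro (i | i) <;> by_cases hi : P i <;> simp [s, hi]
  refine ⟨hs.toPerm.trans h, fun i => ?_, fun i x => ?_⟩ <;> by_cases hi : P i
  · simpa [s, hi] using hp i
  · simpa [s, hi] using (hp i).symm
  · simpa [s, hi] using hi x
  · simpa [s, hi] using (hl i).resolve_right hi x

/-- A graph with a perfect matching by pendant edges is the corona of the graph induced on the
non-pendant ends. -/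
def coronaIso {V ι : Type*} {G : SimpleGraph V} {h : ι ⊕ ι ≃ V} (hp : IsPairing G h)
    (hl : ∀ i x, G.Adj (h (Sum.inr i)) x → x = h (Sum.inl i)) :
    corona (G.comap fun i => h (Sum.inl i)) ≃g G where
  toEquiv := h
  map_rel_iff' := by
    have hrr : ∀ i j, ¬ G.Adj (h (Sum.inr i)) (h (Sum.inr j)) := fun i j hij => by
      simpa using hl i _ hij
    have hlr : ∀ i j, G.Adj (h (Sum.inl i)) (h (Sum.inr j)) ↔ i = j := fun i j =>
      ⟨fun hij => by simpa using hl j _ hij.symm, fun hij => hij ▸ hp i⟩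
    rintro (i | i) (j | j)
    · simp only [corona, fromRel_adj, comap_adj]
      refine ⟨fun hij => ⟨fun e => hij.ne (congrArg h e), Or.inl hij⟩, ?_⟩
      rintro ⟨-, hij | hij⟩
      exacts [hij, hij.symm]
    · simp [corona, hlr]
    · simp [corona, hlr, G.adj_comm (h (Sum.inr i))]
    · simp [corona, hrr]

/-- Contracting the pendant edges maps walks to walks, so the graph on the non-pendant ends
inherits connectedness. -/
theorem isTree_comap {V ι : Type*} {G : SimpleGraph V} (hG : G.IsTree) {h : ι ⊕ ι ≃ V}
    (hl : ∀ i x, G.Adj (h (Sum.inr i)) x → x = h (Sum.inl i)) :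
    (G.comap fun i => h (Sum.inl i)).IsTree := by
  have hinj : Function.Injective fun i => h (Sum.inl i) := h.injective.comp Sum.inl_injective
  have hstep : ∀ u v, G.Adj u v →
      (G.comap fun i => h (Sum.inl i)).Reachable (pairIndex h u) (pairIndex h v) := by
    intro u v huv
    obtain ⟨i | i, rfl⟩ := h.surjective u
    · obtain ⟨j | j, rfl⟩ := h.surjective v
      · exact Adj.reachable (by simpa using huv)
      · have := hl j _ huv.symm
        simp only [EmbeddingLike.apply_eq_iff_eq, Sum.inl.injEq] at this
        simp [this]
    · simp [hl i v huv]
  have hwalk : ∀ u v, G.Walk u v →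
      (G.comap fun i => h (Sum.inl i)).Reachable (pairIndex h u) (pairIndex h v) := by
    intro u v p
    induction p with
    | nil => rfl
    | cons huv _ ih => exact (hstep _ _ huv).trans ih
  have : Nonempty ι := hG.connected.nonempty.map (pairIndex h)
  refine ⟨⟨fun i j => ?_⟩, hG.isAcyclic.of_comap ⟨_, hinj⟩⟩
  obtain ⟨p⟩ := hG.connected.preconnected (h (Sum.inl i)) (h (Sum.inl j))
  simpa using hwalk _ _ p

/-- A tree with at least two vertices is well-covered iff it is isomorphic to
`T'*` for some tree `T'`. -/
theorem stmt3 {V : Type*} [Fintype V] (T : SimpleGraph V) (hT : T.IsTree)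
    (h2 : 2 ≤ Fintype.card V) :
    WellCovered T ↔
      ∃ (m : ℕ) (T' : SimpleGraph (Fin m)), T'.IsTree ∧ Nonempty (T ≃g corona T') := by
  constructor
  · intro hw
    have : Nontrivial V := Fintype.one_lt_card_iff_nontrivial.1 h2
    obtain ⟨m, h, hp, hA⟩ := hw.exists_pairing hT.colorable_two
      hT.connected.preconnected.exists_adj_of_nontrivial
    obtain ⟨k, hk, hl⟩ := hp.exists_oriented (hw.pendant hT.isAcyclic hp hA)
    exact ⟨m, _, isTree_comap hT hl, ⟨(coronaIso hk hl).symm⟩⟩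
  · rintro ⟨m, T', -, ⟨φ⟩⟩ s t hs hs' ht ht'
    have hp : IsPairing T φ.symm.toEquiv := fun i => by
      have : (corona T').Adj (Sum.inl i) (Sum.inr i) := by simp [corona]
      exact φ.symm.map_rel_iff.2 this
    have hl : ∀ i x, T.Adj (φ.symm.toEquiv (Sum.inr i)) x →
        x = φ.symm.toEquiv (Sum.inl i) := by
      intro i x hx
      obtain ⟨y, rfl⟩ := φ.symm.surjective x
      have hy : (corona T').Adj (Sum.inr i) y := φ.symm.map_rel_iff.1 hx
      rcases y with j | j <;> simp [corona] at hy
      rw [hy]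
      rfl
    rw [card_of_pendant hp hl (maximal_indep_iff.2 ⟨hs, hs'⟩),
      card_of_pendant hp hl (maximal_indep_iff.2 ⟨ht, ht'⟩)]
end
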